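/- arXiv:2111.03955 — 4 statements merged into one kernel-verified Lean document; each statement's English description precedes it below -/
import Mathlib

section
/- Let d ≥ 2, 0 < r < 1, and 2 ≤ p < ∞ with r > d/p − 1, and let a be a symbol of class S⁰_ph on ℝ^d. Set γ₂ = (r + 1 − d/p)/(r + 1 + d(p−2)/(2p)). There exists a constant C, depending only on d, r, p and a, such that for every Schwartz function f on ℝ^d with [f]_{−1} := ((2π)^{−d} ∫_{ℝ^d} |κ|^{−2} |f̂(κ)|² dκ)^{1/2} < ∞, the function (D^{−1}𝔞[f])(x) := (2π)^{−d} ∫_{ℝ^d} e^{i x·κ} |κ|^{−1} a(κ) f̂(κ) dκ satisfies ‖D^{−1}𝔞[f]‖_{L^∞} ≤ C · [f]_{−1}^{γ₂} · [f]_{r,p}^{1−γ₂}. -/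
open MeasureTheory ENNReal
open scoped RealInnerProductSpace

noncomputable section

/-- Shorthand for Euclidean space `ℝ^d`. -/
abbrev Ed (d : ℕ) := EuclideanSpace ℝ (Fin d)

/-- The homogeneous Besov (Gagliardo) seminorm `[f]_{r,p}`. -/
def gagliardo (d : ℕ) (r p : ℝ) {F : Type*} [NormedAddCommGroup F] (f : Ed d → F) : ℝ≥0∞ :=
  (∫⁻ x, ∫⁻ y, (‖f x - f y‖₊ : ℝ≥0∞) ^ p / (‖x - y‖₊ : ℝ≥0∞) ^ (r * p + d)) ^ (1 / p)

/-- The homogeneous Hölder seminorm `{f}_r`. -/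
def holderSemi (d : ℕ) (r : ℝ) {F : Type*} [NormedAddCommGroup F] (f : Ed d → F) : ℝ≥0∞ :=
  ⨆ x, ⨆ y, (‖f x - f y‖₊ : ℝ≥0∞) / (‖x - y‖₊ : ℝ≥0∞) ^ r

/-- The Fourier transform `f̂(κ) = ∫ e^{-i x·κ} f(x) dx`. -/
def ftransform (d : ℕ) (f : Ed d → ℂ) (κ : Ed d) : ℂ :=
  ∫ x, Complex.exp (-(Complex.I * (⟪x, κ⟫ : ℂ))) * f x

/-- The homogeneous Sobolev seminorm `[f]_θ = ((2π)^{-d} ∫ |κ|^{2θ} |f̂(κ)|² dκ)^{1/2}`. -/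
def sobolevSemi (d : ℕ) (θ : ℝ) (f : Ed d → ℂ) : ℝ≥0∞ :=
  (ENNReal.ofReal ((2 * Real.pi) ^ (-(d : ℝ))) *
    ∫⁻ κ, (‖κ‖₊ : ℝ≥0∞) ^ (2 * θ) * (‖ftransform d f κ‖₊ : ℝ≥0∞) ^ (2 : ℕ)) ^ ((1 : ℝ) / 2)

/-- A symbol of class `S⁰_{ph}`: smooth away from the origin and positively
homogeneous of degree `0`. -/
def IsSymbol0 (d : ℕ) (a : Ed d → ℂ) : Prop :=
  ContDiffOn ℝ (⊤ : ℕ∞) a {0}ᶜ ∧ ∀ (c : ℝ) (κ : Ed d), 0 < c → κ ≠ 0 → a (c • κ) = a κ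

/-- The operator `𝔞[f](x) = (2π)^{-d} ∫ e^{i x·κ} a(κ) f̂(κ) dκ` associated with a symbol. -/
def symbOp (d : ℕ) (a : Ed d → ℂ) (f : Ed d → ℂ) (x : Ed d) : ℂ :=
  (((2 * Real.pi) ^ (-(d : ℝ)) : ℝ) : ℂ) *
    ∫ κ, Complex.exp (Complex.I * (⟪x, κ⟫ : ℂ)) * a κ * ftransform d f κ

/-- The partial derivative `∂_i f(x)`. -/
def pd (d : ℕ) (i : Fin d) (f : Ed d → ℝ) (x : Ed d) : ℝ :=
  fderiv ℝ f x (EuclideanSpace.single i 1)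

/-- The half-wave propagator `(e^{itD} g)(x) = (2π)^{-d} ∫ e^{i x·κ} e^{i t|κ|} ĝ(κ) dκ`. -/
def halfWave (d : ℕ) (t : ℝ) (g : Ed d → ℂ) (x : Ed d) : ℂ :=
  (((2 * Real.pi) ^ (-(d : ℝ)) : ℝ) : ℂ) *
    ∫ κ, Complex.exp (Complex.I * ((⟪x, κ⟫ : ℂ) + (t : ℂ) * ((‖κ‖ : ℝ) : ℂ))) *
      ftransform d g κ

end

section helpers
open FourierTransform

lemma lintegral_affine_aux (d : ℕ) (g : Ed d → ℝ≥0∞) (x0 : Ed d) {t : ℝ} (ht : 0 < t) :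
    ∫⁻ x, g (x0 + t • x) = ENNReal.ofReal ((t ^ d)⁻¹) * ∫⁻ x, g x := by
  have h1 : ∫⁻ x, g (x0 + t • x) = ∫⁻ y, g (x0 + y) ∂(Measure.map (fun x : Ed d => t • x) volume) :=
    (lintegral_map_equiv (fun y => g (x0 + y))
      (Homeomorph.smul (isUnit_iff_ne_zero.2 ht.ne').unit).toMeasurableEquiv).symm
  rw [h1, Measure.map_addHaar_smul volume ht.ne', lintegral_smul_measure,
    lintegral_add_left_eq_self (fun y => g y) x0]
  simp [abs_of_pos ht]

lemma ftransform_eq_aux (d : ℕ) (f : Ed d → ℂ) (κ : Ed d) :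
    ftransform d f κ = 𝓕 f ((2 * Real.pi)⁻¹ • κ) := by
  rw [Real.fourier_eq', ftransform]
  congr 1
  ext x
  rw [smul_eq_mul]
  congr 2
  rw [real_inner_smul_right]
  push_cast
  have : (Real.pi : ℂ) ≠ 0 := by exact_mod_cast Real.pi_ne_zero
  field_simp

lemma ftransform_affine_aux (d : ℕ) (f : Ed d → ℂ) (x κ : Ed d) {t : ℝ} (ht : 0 < t) :
    ftransform d (fun y => f (x + t • y)) κ =
      Complex.exp (Complex.I * (⟪x, t⁻¹ • κ⟫ : ℂ)) * (((t ^ d)⁻¹ : ℝ) : ℂ) *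
        ftransform d f (t⁻¹ • κ) := by
  unfold ftransform
  have h1 := Measure.integral_comp_smul_of_nonneg (volume : Measure (Ed d))
    (fun y => Complex.exp (-(Complex.I * (⟪y, t⁻¹ • κ⟫ : ℂ))) * f (x + y)) t (hR := ht.le)
  have h2 := integral_add_left_eq_self (μ := (volume : Measure (Ed d)))
    (fun y => Complex.exp (Complex.I * (⟪x, t⁻¹ • κ⟫ : ℂ)) *
      (Complex.exp (-(Complex.I * (⟪y, t⁻¹ • κ⟫ : ℂ))) * f y)) x
  have h3 : ∀ y : Ed d, Complex.exp (Complex.I * (⟪x, t⁻¹ • κ⟫ : ℂ)) *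
      (Complex.exp (-(Complex.I * (⟪x + y, t⁻¹ • κ⟫ : ℂ))) * f (x + y)) =
      Complex.exp (-(Complex.I * (⟪y, t⁻¹ • κ⟫ : ℂ))) * f (x + y) := by
    intro y
    rw [← mul_assoc, ← Complex.exp_add, inner_add_left]
    congr 2
    push_cast
    ring
  rw [integral_congr_ae (.of_forall h3), integral_const_mul] at h2
  rw [h2] at h1
  have h4 : ∀ y : Ed d, (⟪t • y, t⁻¹ • κ⟫ : ℝ) = ⟪y, κ⟫ := by
    intro y
    rw [real_inner_smul_left, real_inner_smul_right]
    field_simp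
  simp only [h4] at h1
  rw [h1]
  simp only [finrank_euclideanSpace, Fintype.card_fin, Complex.real_smul]
  ring

lemma schwartz_finite_aux (d : ℕ) (A : SchwartzMap (Ed d) ℂ) {s q : ℝ} (hs : 0 ≤ s) (hq : 1 ≤ q) :
    ∫⁻ y, (‖A y‖ₑ * ‖y‖ₑ ^ s) ^ q ≠ ⊤ := by
  obtain ⟨N, hN⟩ := exists_nat_ge s
  set g : Ed d → ℝ := fun y => ‖A y‖ + ‖y‖ ^ N * ‖A y‖ with hg
  have hg0 : ∀ y, 0 ≤ g y := fun y => by positivity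
  have hgi : Integrable g := A.integrable.norm.add (A.integrable_pow_mul volume N)
  obtain ⟨C0, hC0, h0⟩ := A.decay 0 0
  obtain ⟨C1, hC1, h1⟩ := A.decay N 0
  have hgb : ∀ y, g y ≤ C0 + C1 := by
    intro y
    have := h0 y; have := h1 y
    simp at *
    simp only [hg]; linarith
  have hle : ∀ y, ‖A y‖ₑ * ‖y‖ₑ ^ s ≤ ENNReal.ofReal (g y) := by
    intro y
    rw [← ofReal_norm, ← ofReal_norm, ENNReal.ofReal_rpow_of_nonneg (norm_nonneg _) hs,
      ← ENNReal.ofReal_mul (norm_nonneg _)]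
    apply ENNReal.ofReal_le_ofReal
    have : ‖y‖ ^ s ≤ 1 + ‖y‖ ^ N := by
      rcases le_total ‖y‖ 1 with h | h
      · have := Real.rpow_le_one (norm_nonneg y) h hs
        have : 0 ≤ ‖y‖ ^ N := by positivity
        linarith
      · have := Real.rpow_le_rpow_of_exponent_le h hN
        rw [Real.rpow_natCast] at this
        linarith
    calc ‖A y‖ * ‖y‖ ^ s ≤ ‖A y‖ * (1 + ‖y‖ ^ N) := by gcongr
      _ = g y := by simp only [hg]; ring
  have hle2 : ∀ y, (‖A y‖ₑ * ‖y‖ₑ ^ s) ^ q ≤ ENNReal.ofReal ((C0 + C1) ^ (q - 1) * g y) := by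
    intro y
    refine (ENNReal.rpow_le_rpow (hle y) (by linarith)).trans ?_
    rw [ENNReal.ofReal_rpow_of_nonneg (hg0 y) (by linarith)]
    apply ENNReal.ofReal_le_ofReal
    rcases (hg0 y).eq_or_lt with h | h
    · rw [← h, Real.zero_rpow (by linarith)]; simp
    · calc g y ^ q = g y ^ (q - 1) * g y := by
            rw [← Real.rpow_add_one h.ne']; simp
        _ ≤ _ := by
          gcongr
          exact hgb y
  refine ((lintegral_mono hle2).trans_lt ?_).ne
  exact (hgi.const_mul _).lintegral_lt_top

end helpers
section helpers2
open FourierTransform Convolution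

lemma key_repr_aux (d : ℕ) (k l A : SchwartzMap (Ed d) ℂ) (hA : 𝓕 (A : Ed d → ℂ) = k)
    (hk : k 0 = 0) (F : Ed d → ℂ) (hFi : Integrable F) (hFb : ∃ B, ∀ x, ‖F x‖ ≤ B) :
    ∫ ξ, k ξ * l ξ * 𝓕 F ξ = ∫ z, 𝓕 (l : Ed d → ℂ) z * ∫ y, A y * (F (z - y) - F z) := by
  have hA0 : ∫ y, A y = 0 := by
    have := congrFun hA 0
    rw [Real.fourier_eq', hk] at this
    simpa using this
  have hconv : Integrable (A ⋆[ContinuousLinearMap.mul ℂ ℂ] F) :=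
    A.integrable.integrable_convolution _ hFi
  have h1 : ∀ ξ, 𝓕 (A ⋆[ContinuousLinearMap.mul ℂ ℂ] F) ξ = k ξ * 𝓕 F ξ := by
    intro ξ
    rw [Real.fourier_mul_convolution_eq A.integrable hFi, hA]
  have h2 := VectorFourier.integral_fourierIntegral_smul_eq_flip (L := innerₗ (Ed d))
      (μ := volume) (ν := volume)
      Real.continuous_fourierChar continuous_inner l.integrable hconv
  have h3 : ∫ ξ, 𝓕 (l : Ed d → ℂ) ξ * (A ⋆[ContinuousLinearMap.mul ℂ ℂ] F) ξ =
      ∫ ξ, l ξ * 𝓕 (A ⋆[ContinuousLinearMap.mul ℂ ℂ] F) ξ := by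
    simpa using! h2
  simp_rw [h1] at h3
  have h4 : ∀ z, (A ⋆[ContinuousLinearMap.mul ℂ ℂ] F) z = ∫ y, A y * (F (z - y) - F z) := by
    intro z
    obtain ⟨B, hB⟩ := hFb
    have i1 : Integrable (fun y => A y * F (z - y)) := by
      refine Integrable.mul_bdd (c := B) A.integrable ?_ (.of_forall fun y => hB _)
      exact (hFi.comp_sub_left z).aestronglyMeasurable
    simp_rw [mul_sub]
    rw [integral_sub i1 (A.integrable.mul_const _), integral_mul_const, hA0]
    simp [convolution_def]
  simp_rw [h4] at h3
  rw [h3]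
  congr 1; ext ξ; ring

lemma key_unit_aux (d : ℕ) (r p : ℝ) (hr0 : 0 < r) (hp : 2 ≤ p) (k l : SchwartzMap (Ed d) ℂ)
    (hk : k 0 = 0) :
    ∃ C : ℝ≥0∞, C ≠ ⊤ ∧ ∀ F : Ed d → ℂ, Continuous F → Integrable F → (∃ B, ∀ x, ‖F x‖ ≤ B) →
      ‖∫ ξ, k ξ * l ξ * 𝓕 F ξ‖ₑ ≤ C * gagliardo d r p F := by
  have hp0 : 0 < p := by linarith
  have hpq : p.HolderConjugate (p.conjExponent) := Real.HolderConjugate.conjExponent (by linarith)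
  set q := p.conjExponent with hq
  have hq1 : 1 ≤ q := hpq.symm.lt.le
  set A : SchwartzMap (Ed d) ℂ := 𝓕⁻ k with hAdef
  have hA : 𝓕 (A : Ed d → ℂ) = k := by
    rw [← SchwartzMap.fourier_coe, hAdef, FourierTransform.fourier_fourierInv_eq]
  set s : ℝ := r + d / p with hs
  have hs0 : 0 ≤ s := by positivity
  set lh : SchwartzMap (Ed d) ℂ := 𝓕 l with hlh
  set I1 := ∫⁻ y, (‖A y‖ₑ * ‖y‖ₑ ^ s) ^ q with hI1
  set I2 := ∫⁻ y, (‖lh y‖ₑ * ‖y‖ₑ ^ (0:ℝ)) ^ q with hI2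
  have hI1t : I1 ≠ ⊤ := schwartz_finite_aux d A hs0 hq1
  have hI2t : I2 ≠ ⊤ := schwartz_finite_aux d lh le_rfl hq1
  refine ⟨(I2 * I1) ^ (1 / q), ?_, ?_⟩
  · exact ENNReal.rpow_ne_top_of_nonneg (by positivity) (ENNReal.mul_ne_top hI2t hI1t)
  intro F hFc hFi hFb
  rw [key_repr_aux d k l A hA hk F hFi hFb]
  set Φ : Ed d × Ed d → ℝ≥0∞ := fun w => ‖F w.1 - F w.2‖ₑ / ‖w.1 - w.2‖ₑ ^ s with hΦ
  set N : Ed d × Ed d → ℝ≥0∞ := fun w => ‖lh w.1‖ₑ * (‖A (w.1 - w.2)‖ₑ * ‖w.1 - w.2‖ₑ ^ s) with hN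
  have hΦm : Measurable Φ := by
    have : Measurable F := hFc.measurable
    fun_prop
  have hNm : Measurable N := by
    have : Measurable A := A.continuous.measurable
    have : Measurable lh := lh.continuous.measurable
    fun_prop
  have hpt : ∀ z w, ‖lh z‖ₑ * ‖A (z - w) * (F w - F z)‖ₑ ≤ (Φ * N) (z, w) := by
    intro z w
    rcases eq_or_ne z w with rfl | hzw
    · simp
    have h0 : ‖z - w‖ₑ ≠ 0 := by simpa [sub_eq_zero] using hzw
    have h1 : ‖z - w‖ₑ ^ s ≠ 0 := by simp [h0, ENNReal.rpow_eq_zero_iff]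
    have h2 : ‖z - w‖ₑ ^ s ≠ ⊤ := ENNReal.rpow_ne_top_of_nonneg hs0 (by simp)
    rw [Pi.mul_apply]
    simp only [hΦ, hN]
    rw [enorm_mul, ← enorm_neg (F w - F z), neg_sub]
    apply le_of_eq
    calc _ = ‖F z - F w‖ₑ * (‖lh z‖ₑ * ‖A (z - w)‖ₑ) := by ring
      _ = (‖F z - F w‖ₑ / ‖z - w‖ₑ ^ s * ‖z - w‖ₑ ^ s) * (‖lh z‖ₑ * ‖A (z - w)‖ₑ) := by
        rw [ENNReal.div_mul_cancel h1 h2]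
      _ = _ := by ring
  have hΦp : ∀ z w, Φ (z, w) ^ p =
      (‖F z - F w‖₊ : ℝ≥0∞) ^ p / (‖z - w‖₊ : ℝ≥0∞) ^ (r * p + d) := by
    intro z w
    simp only [hΦ]
    rw [ENNReal.div_rpow_of_nonneg _ _ hp0.le, ← ENNReal.rpow_mul]
    congr 2
    rw [hs]; field_simp
  have hNq : ∫⁻ w, N w ^ q ∂(volume.prod volume) = I2 * I1 := by
    rw [lintegral_prod _ (hNm.pow_const q).aemeasurable]
    have : ∀ z, ∫⁻ w, N (z, w) ^ q = ‖lh z‖ₑ ^ q * I1 := by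
      intro z
      simp only [hN]
      simp_rw [ENNReal.mul_rpow_of_nonneg _ _ hpq.symm.nonneg]
      rw [lintegral_const_mul' _ _ (by simp [ENNReal.rpow_eq_top_iff, hpq.symm.nonneg])]
      congr 1
      have := lintegral_sub_left_eq_self (μ := (volume : Measure (Ed d)))
        (fun y => ‖A y‖ₑ ^ q * (‖y‖ₑ ^ s) ^ q) z
      rw [this, hI1]
      simp_rw [ENNReal.mul_rpow_of_nonneg _ _ hpq.symm.nonneg]
    simp_rw [this]
    rw [lintegral_mul_const' _ _ hI1t, hI2]
    simp
  calc ‖∫ z, 𝓕 (l : Ed d → ℂ) z * ∫ y, A y * (F (z - y) - F z)‖ₑ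
      ≤ ∫⁻ z, ‖lh z * ∫ y, A y * (F (z - y) - F z)‖ₑ := enorm_integral_le_lintegral_enorm _
    _ ≤ ∫⁻ z, ∫⁻ w, (Φ * N) (z, w) := by
        apply lintegral_mono
        intro z
        simp only
        rw [enorm_mul]
        calc _ ≤ ‖lh z‖ₑ * ∫⁻ y, ‖A y * (F (z - y) - F z)‖ₑ := by
              gcongr; exact enorm_integral_le_lintegral_enorm _
          _ = ‖lh z‖ₑ * ∫⁻ w, ‖A (z - w) * (F w - F z)‖ₑ := by
              have := lintegral_sub_left_eq_self (μ := (volume : Measure (Ed d)))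
                (fun y => ‖A y * (F (z - y) - F z)‖ₑ) z
              rw [← this]; simp
          _ = ∫⁻ w, ‖lh z‖ₑ * ‖A (z - w) * (F w - F z)‖ₑ := by
              rw [lintegral_const_mul' _ _ (by simp)]
          _ ≤ _ := lintegral_mono (hpt z)
    _ = ∫⁻ w, (Φ * N) w ∂(volume.prod volume) := by
        rw [lintegral_prod _ (hΦm.mul hNm).aemeasurable]
    _ ≤ _ := ENNReal.lintegral_mul_le_Lp_mul_Lq _ hpq hΦm.aemeasurable hNm.aemeasurable
    _ = (I2 * I1) ^ (1 / q) * gagliardo d r p F := by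
        rw [hNq, mul_comm, lintegral_prod _ (hΦm.pow_const p).aemeasurable]
        simp_rw [hΦp]
        rfl
end helpers2
section helpers3
open FourierTransform

lemma gagliardo_affine_aux (d : ℕ) (r p : ℝ) (hr0 : 0 < r) (hp : 2 ≤ p) (f : Ed d → ℂ) (x : Ed d)
    {t : ℝ} (ht : 0 < t) :
    gagliardo d r p (fun y => f (x + t • y)) =
      ENNReal.ofReal (t ^ (r - d / p)) * gagliardo d r p f := by
  have hp0 : 0 < p := by linarith
  set e : ℝ := r * p + d with he
  have he0 : 0 ≤ e := by positivity
  set Ψ : Ed d → Ed d → ℝ≥0∞ := fun X Y =>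
    (‖f X - f Y‖₊ : ℝ≥0∞) ^ p / (‖X - Y‖₊ : ℝ≥0∞) ^ e with hΨ
  have hpt : ∀ z w : Ed d, (‖f (x + t • z) - f (x + t • w)‖₊ : ℝ≥0∞) ^ p / (‖z - w‖₊ : ℝ≥0∞) ^ e
      = ENNReal.ofReal (t ^ e) * Ψ (x + t • z) (x + t • w) := by
    intro z w
    simp only [hΨ]
    have h1 : x + t • z - (x + t • w) = t • (z - w) := by rw [smul_sub]; abel
    have h2 : ((‖t • (z - w)‖₊ : ℝ≥0∞)) = ENNReal.ofReal t * (‖z - w‖₊ : ℝ≥0∞) := by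
      rw [← enorm_eq_nnnorm, ← enorm_eq_nnnorm, enorm_smul, Real.enorm_of_nonneg ht.le]
    rw [h1, h2, ENNReal.mul_rpow_of_nonneg _ _ he0, ← ENNReal.ofReal_rpow_of_pos ht, ← mul_div_assoc,
      ENNReal.mul_div_mul_left]
    · rw [ENNReal.ofReal_rpow_of_pos ht]
      simpa using Real.rpow_pos_of_pos ht e
    · rw [ENNReal.ofReal_rpow_of_pos ht]
      simp
  unfold gagliardo
  simp only [← he]
  simp_rw [hpt]
  have h3 : ∀ z : Ed d, ∫⁻ w, ENNReal.ofReal (t ^ e) * Ψ (x + t • z) (x + t • w) =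
      ENNReal.ofReal (t ^ e) * (ENNReal.ofReal ((t ^ d)⁻¹) * ∫⁻ w, Ψ (x + t • z) w) := by
    intro z
    rw [lintegral_const_mul' _ _ (by simp), lintegral_affine_aux d _ x ht]
  simp_rw [h3]
  rw [lintegral_const_mul' _ _ (by simp), lintegral_const_mul' _ _ (by simp),
    lintegral_affine_aux d (fun z => ∫⁻ w, Ψ z w) x ht, ← mul_assoc, ← mul_assoc,
    ENNReal.mul_rpow_of_nonneg _ _ (by positivity), ← ENNReal.ofReal_mul (by positivity),
    ← ENNReal.ofReal_mul (by positivity), ENNReal.ofReal_rpow_of_nonneg (by positivity) (by positivity)]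
  congr 2
  rw [← Real.rpow_natCast, ← Real.rpow_neg ht.le, ← Real.rpow_add ht, ← Real.rpow_add ht,
    ← Real.rpow_mul ht.le, he]
  congr 1
  field_simp
  ring

lemma key_scaled_aux (d : ℕ) (r p : ℝ) (hr0 : 0 < r) (hp : 2 ≤ p) (k l : SchwartzMap (Ed d) ℂ)
    (M : Ed d → ℂ) (hM : ∀ κ, M κ = k ((2 * Real.pi)⁻¹ • κ) * l ((2 * Real.pi)⁻¹ • κ))
    (hk : k 0 = 0) :
    ∃ C : ℝ≥0∞, C ≠ ⊤ ∧ ∀ (f : SchwartzMap (Ed d) ℂ) (x : Ed d) (t : ℝ), 0 < t →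
      ‖∫ κ, Complex.exp (Complex.I * (⟪x, κ⟫ : ℂ)) * M (t • κ) * ftransform d f κ‖ₑ ≤
        C * (ENNReal.ofReal (t ^ (r - d / p)) * gagliardo d r p f) := by
  obtain ⟨C, hC, h⟩ := key_unit_aux d r p hr0 hp k l hk
  refine ⟨ENNReal.ofReal ((2 * Real.pi) ^ d) * C, ENNReal.mul_ne_top (by simp) hC, ?_⟩
  intro f x t ht
  have hpi : 0 < 2 * Real.pi := by positivity
  set F : Ed d → ℂ := fun y => f (x + t • y) with hF
  have hFc : Continuous F := f.continuous.comp (by fun_prop)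
  have hFi : Integrable F := by
    have h1 : Integrable (fun y => f (x + y)) := f.integrable.comp_add_left x
    exact h1.comp_smul ht.ne'
  have hFb : ∃ B, ∀ y, ‖F y‖ ≤ B := by
    obtain ⟨B, _, hB⟩ := f.decay 0 0
    exact ⟨B, fun y => by simpa using hB (x + t • y)⟩
  have hb := h F hFc hFi hFb
  rw [gagliardo_affine_aux d r p hr0 hp f x ht] at hb
  have h1 := Measure.integral_comp_smul_of_nonneg (volume : Measure (Ed d))
    (fun ξ => k ξ * l ξ * 𝓕 F ξ) ((2 * Real.pi)⁻¹ * t) (hR := by positivity)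
  have h2 : ∀ κ : Ed d, k (((2 * Real.pi)⁻¹ * t) • κ) * l (((2 * Real.pi)⁻¹ * t) • κ) *
      𝓕 F (((2 * Real.pi)⁻¹ * t) • κ) = (((t ^ d)⁻¹ : ℝ) : ℂ) *
      (Complex.exp (Complex.I * (⟪x, κ⟫ : ℂ)) * M (t • κ) * ftransform d f κ) := by
    intro κ
    rw [mul_smul, ← ftransform_eq_aux, hF, ftransform_affine_aux d f x _ ht, inv_smul_smul₀ ht.ne', hM]
    ring
  rw [integral_congr_ae (.of_forall h2), integral_const_mul] at h1
  have h3 : ∫ κ, Complex.exp (Complex.I * (⟪x, κ⟫ : ℂ)) * M (t • κ) * ftransform d f κ =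
      ((2 * Real.pi) ^ d : ℝ) * ∫ ξ, k ξ * l ξ * 𝓕 F ξ := by
    have ht' : (t : ℂ) ≠ 0 := by exact_mod_cast ht.ne'
    have hpi' : (Real.pi : ℂ) ≠ 0 := by exact_mod_cast Real.pi_ne_zero
    simp only [finrank_euclideanSpace, Fintype.card_fin, Complex.real_smul] at h1
    push_cast at h1 ⊢
    field_simp at h1 ⊢
    rw [h1, div_pow]
    field_simp
  rw [h3, enorm_mul, mul_assoc]
  gcongr
  rw [← ofReal_norm, Complex.norm_real, Real.norm_of_nonneg (by positivity)]

lemma key_low_aux (d : ℕ) (M : SchwartzMap (Ed d) ℂ) (hM0 : M 0 = 0) :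
    ∃ C : ℝ≥0∞, C ≠ ⊤ ∧ ∀ (f : SchwartzMap (Ed d) ℂ) (x : Ed d) (t : ℝ), 0 < t →
      ‖∫ κ, Complex.exp (Complex.I * (⟪x, κ⟫ : ℂ)) * M (t • κ) * ftransform d f κ‖ₑ ≤
        C * (ENNReal.ofReal (t ^ (-1 - (d : ℝ) / 2)) * sobolevSemi d (-1) f) := by
  set I1 := ∫⁻ y, (‖M y‖ₑ * ‖y‖ₑ ^ (1:ℝ)) ^ (2:ℝ) with hI1
  have hI1t : I1 ≠ ⊤ := schwartz_finite_aux d M zero_le_one one_le_two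
  have hpi : 0 < 2 * Real.pi := by positivity
  refine ⟨I1 ^ (1 / 2 : ℝ) * ENNReal.ofReal (((2 * Real.pi) ^ (d:ℝ)) ^ (1 / 2 : ℝ)),
    ENNReal.mul_ne_top (ENNReal.rpow_ne_top_of_nonneg (by norm_num) hI1t) (by simp), ?_⟩
  intro f x t ht
  have hfm : Measurable (ftransform d f) := by
    have : ftransform d f = fun κ => (𝓕 f : SchwartzMap (Ed d) ℂ) ((2 * Real.pi)⁻¹ • κ) := by
      ext κ; rw [ftransform_eq_aux]; rfl
    rw [this]
    exact ((𝓕 f : SchwartzMap (Ed d) ℂ).continuous.comp (by fun_prop)).measurable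
  have hMm : Measurable M := M.continuous.measurable
  set u : Ed d → ℝ≥0∞ := fun κ => ‖M (t • κ)‖ₑ * ‖κ‖ₑ ^ (1:ℝ) with hu
  set v : Ed d → ℝ≥0∞ := fun κ => ‖κ‖ₑ ^ (-1:ℝ) * ‖ftransform d f κ‖ₑ with hv
  have hum : Measurable u := by fun_prop
  have hvm : Measurable v := by fun_prop
  have hpt : ∀ κ, ‖Complex.exp (Complex.I * (⟪x, κ⟫ : ℂ)) * M (t • κ) * ftransform d f κ‖ₑ ≤
      (u * v) κ := by
    intro κ
    rcases eq_or_ne κ 0 with rfl | hκ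
    · simp [hM0]
    have h0 : ‖κ‖ₑ ≠ 0 := by simpa using hκ
    have he : ‖Complex.exp (Complex.I * (⟪x, κ⟫ : ℂ))‖ₑ = 1 := by
      rw [← ofReal_norm, mul_comm, Complex.norm_exp_ofReal_mul_I]; simp
    rw [enorm_mul, enorm_mul, he, one_mul, Pi.mul_apply]
    simp only [hu, hv]
    apply le_of_eq
    rw [mul_assoc, ← mul_assoc (‖κ‖ₑ ^ (1:ℝ)), ← ENNReal.rpow_add _ _ h0 (by simp)]
    simp
  have hu2 : ∫⁻ κ, u κ ^ (2:ℝ) = ENNReal.ofReal (t ^ (-2 - (d:ℝ))) * I1 := by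
    have h1 : ∀ κ, u κ ^ (2:ℝ) = ENNReal.ofReal (t ^ (-2 : ℝ)) *
        (‖M (0 + t • κ)‖ₑ * ‖0 + t • κ‖ₑ ^ (1:ℝ)) ^ (2:ℝ) := by
      intro κ
      simp only [hu, zero_add, ENNReal.rpow_one]
      rw [enorm_smul, Real.enorm_of_nonneg ht.le, ← ENNReal.ofReal_rpow_of_pos ht,
        ENNReal.mul_rpow_of_nonneg _ _ (by norm_num), ENNReal.mul_rpow_of_nonneg _ _ (by norm_num),
        ENNReal.mul_rpow_of_nonneg _ _ (by norm_num)]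
      have : ENNReal.ofReal t ^ (-2 : ℝ) * ENNReal.ofReal t ^ (2 : ℝ) = 1 := by
        rw [← ENNReal.rpow_add _ _ (by simpa using ht) (by simp)]; simp
      calc _ = 1 * (‖M (t • κ)‖ₑ ^ (2:ℝ) * ‖κ‖ₑ ^ (2:ℝ)) := by rw [one_mul]
        _ = _ := by rw [← this]; ring
    simp_rw [h1]
    rw [lintegral_const_mul' _ _ (by simp),
      lintegral_affine_aux d (fun y => (‖M y‖ₑ * ‖y‖ₑ ^ (1:ℝ)) ^ (2:ℝ)) 0 ht, ← mul_assoc,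
      ← ENNReal.ofReal_mul (by positivity)]
    congr 2
    rw [← Real.rpow_natCast, ← Real.rpow_neg ht.le, ← Real.rpow_add ht]
    congr 1
  have hv2 : ∀ κ, v κ ^ (2:ℝ) =
      (‖κ‖₊ : ℝ≥0∞) ^ (2 * (-1) : ℝ) * (‖ftransform d f κ‖₊ : ℝ≥0∞) ^ (2 : ℕ) := by
    intro κ
    simp only [hv]
    rw [ENNReal.mul_rpow_of_nonneg _ _ (by norm_num), ← ENNReal.rpow_mul, mul_comm (-1:ℝ),
      ← ENNReal.rpow_natCast]
    simp [enorm_eq_nnnorm]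
  calc _ ≤ ∫⁻ κ, (u * v) κ := (enorm_integral_le_lintegral_enorm _).trans (lintegral_mono hpt)
    _ ≤ _ := ENNReal.lintegral_mul_le_Lp_mul_Lq _ Real.HolderConjugate.two_two
        hum.aemeasurable hvm.aemeasurable
    _ = _ := by
      rw [hu2]
      simp_rw [hv2]
      unfold sobolevSemi
      set J := ∫⁻ κ : Ed d, (‖κ‖₊ : ℝ≥0∞) ^ (2 * (-1) : ℝ) *
        (‖ftransform d f κ‖₊ : ℝ≥0∞) ^ (2 : ℕ)
      rw [ENNReal.mul_rpow_of_nonneg _ _ (by norm_num), ENNReal.mul_rpow_of_nonneg _ _ (by norm_num),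
        ENNReal.ofReal_rpow_of_nonneg (by positivity) (by norm_num),
        ENNReal.ofReal_rpow_of_nonneg (by positivity) (by norm_num)]
      have h1 : (t ^ (-2 - (d:ℝ))) ^ (1 / 2 : ℝ) = t ^ (-1 - (d:ℝ) / 2) := by
        rw [← Real.rpow_mul ht.le]; congr 1; ring
      have h2 : ENNReal.ofReal (((2 * Real.pi) ^ (d:ℝ)) ^ (1 / 2 : ℝ)) *
          ENNReal.ofReal (((2 * Real.pi) ^ (-(d:ℝ))) ^ (1 / 2 : ℝ)) = 1 := by
        rw [← ENNReal.ofReal_mul (by positivity), ← Real.mul_rpow (by positivity) (by positivity),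
          ← Real.rpow_add hpi]
        simp
      rw [h1]
      calc _ = 1 * (ENNReal.ofReal (t ^ (-1 - (d:ℝ) / 2)) * I1 ^ (1 / 2 : ℝ) * J ^ (1 / 2 : ℝ)) := by
            rw [one_mul]
        _ = _ := by rw [← h2]; ring
end helpers3
section helpers4
open FourierTransform Set

lemma symbol_pieces_aux (d : ℕ) (a : Ed d → ℂ) (ha : IsSymbol0 d a) :
    ∃ (k l M : SchwartzMap (Ed d) ℂ) (c : ℝ), 0 < c ∧ k 0 = 0 ∧ M 0 = 0 ∧
      (∀ κ, M κ = k ((2 * Real.pi)⁻¹ • κ) * l ((2 * Real.pi)⁻¹ • κ)) ∧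
      (∀ κ, κ ≠ 0 → IntegrableOn (fun t : ℝ => M (t • κ)) (Ioi 0) ∧
        ∫ t in Ioi (0:ℝ), M (t • κ) = c * ((‖κ‖ : ℝ) : ℂ)⁻¹ * a κ) ∧
      ∀ κ, κ ≠ 0 → ∫ t in Ioi (0:ℝ), ‖M (t • κ)‖ = c * ‖κ‖⁻¹ * ‖a κ‖ := by
  obtain ⟨has, hah⟩ := ha
  let h : ContDiffBump (1:ℝ) := ⟨1/4, 1/2, by norm_num, by norm_num⟩
  have hz : ∀ s : ℝ, s ≤ 1/2 ∨ 3/2 ≤ s → h s = 0 := by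
    intro s hs
    apply h.zero_of_le_dist
    show (1/2 : ℝ) ≤ _
    rw [Real.dist_eq]
    rcases hs with hs | hs
    · rw [abs_of_nonpos] <;> linarith
    · rw [abs_of_nonneg] <;> linarith
  have h1 : h 1 = 1 := h.one_of_mem_closedBall (by simp [h.rIn_pos.le])
  have hcd : ContDiff ℝ (⊤ : ℕ∞) h := h.contDiff
  have hpi : 0 < 2 * Real.pi := by positivity
  have hpi0 : (2 * Real.pi) ≠ 0 := hpi.ne'
  set L0 : Ed d → ℂ := fun κ => ((h (‖κ‖ ^ 2) : ℝ) : ℂ) with hL0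
  set K0 : Ed d → ℂ := fun κ => a κ * L0 κ with hK0
  have hL0s : ContDiff ℝ (⊤ : ℕ∞) L0 :=
    Complex.ofRealCLM.contDiff.comp (hcd.comp (contDiff_norm_sq ℝ))
  have hL0c : HasCompactSupport L0 := by
    refine HasCompactSupport.intro (isCompact_closedBall (0 : Ed d) 2) ?_
    intro x hx
    have : 2 < ‖x‖ := by simpa using hx
    simp only [hL0]
    rw [hz _ (Or.inr (by nlinarith))]; simp
  have hK0c : HasCompactSupport K0 := hL0c.mul_left
  have hL00 : L0 0 = 0 := by simp only [hL0]; rw [hz _ (Or.inl (by simp))]; simp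
  have hK0s : ContDiff ℝ (⊤ : ℕ∞) K0 := by
    rw [contDiff_iff_contDiffAt]
    intro x
    rcases eq_or_ne x 0 with rfl | hx
    · have : K0 =ᶠ[nhds 0] fun _ => 0 := by
        filter_upwards [Metric.ball_mem_nhds (0 : Ed d) (show (0:ℝ) < 1/2 by norm_num)] with y hy
        have hy' : ‖y‖ < 1/2 := by simpa using hy
        have : L0 y = 0 := by
          simp only [hL0]
          rw [hz _ (Or.inl (by nlinarith [norm_nonneg y]))]; simp
        simp only [hK0, this, mul_zero]
      exact contDiffAt_const.congr_of_eventuallyEq this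
    · exact (has.contDiffAt (isOpen_compl_singleton.mem_nhds hx)).mul hL0s.contDiffAt
  have hsc : ContDiff ℝ (⊤ : ℕ∞) (fun κ : Ed d => (2 * Real.pi) • κ) := contDiff_const_smul _
  have hcomp : ∀ G : Ed d → ℂ, HasCompactSupport G →
      HasCompactSupport (fun κ => G ((2 * Real.pi) • κ)) := fun G hG =>
    hG.comp_smul hpi0
  set H : ℝ → ℝ := fun s => h (s ^ 2) ^ 2 with hH
  have hHc : Continuous H := (hcd.continuous.comp (by fun_prop)).pow 2
  have hHs : HasCompactSupport H := by
    refine HasCompactSupport.intro (isCompact_closedBall (0 : ℝ) 2) ?_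
    intro x hx
    have : 2 < |x| := by simpa using hx
    simp only [hH]
    rw [hz _ (Or.inr (by rw [← sq_abs]; nlinarith))]; simp
  have hHi : Integrable H := hHc.integrable_of_hasCompactSupport hHs
  have hHpos : 0 < ∫ s in Ioi (0:ℝ), H s := by
    rw [setIntegral_pos_iff_support_of_nonneg_ae (.of_forall fun s => by positivity)
      hHi.integrableOn]
    have ho : IsOpen (Function.support H ∩ Ioi 0) :=
      (isOpen_ne_fun hHc continuous_const).inter isOpen_Ioi
    exact ho.measure_pos _ ⟨1, by simp [hH, h1], by simp⟩
  refine ⟨(hcomp K0 hK0c).toSchwartzMap (hK0s.comp hsc),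
    (hcomp L0 hL0c).toSchwartzMap (hL0s.comp hsc),
    (hL0c.mul_left (f := K0)).toSchwartzMap (hK0s.mul hL0s), ∫ s in Ioi (0:ℝ), H s, hHpos,
    ?_, ?_, ?_, ?_, ?_⟩
  · simp [hK0, hL00]
  · simp [hL00]
  · intro κ
    simp only [HasCompactSupport.toSchwartzMap_toFun, Pi.mul_apply, smul_inv_smul₀ hpi0]
  · intro κ hκ
    have hκ' : 0 < ‖κ‖ := norm_pos_iff.2 hκ
    have heq : ∀ t ∈ Ioi (0:ℝ), a κ * ((H (t * ‖κ‖) : ℝ) : ℂ) =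
        (hL0c.mul_left (f := K0)).toSchwartzMap (hK0s.mul hL0s) (t • κ) := by
      intro t ht
      simp only [HasCompactSupport.toSchwartzMap_toFun, hK0, hL0, Pi.mul_apply]
      rw [hah t κ ht hκ, norm_smul, Real.norm_of_nonneg (le_of_lt ht)]
      simp only [hH]
      push_cast
      ring
    have hi : IntegrableOn (fun t : ℝ => H (t * ‖κ‖)) (Ioi 0) :=
      (hHi.comp_mul_right' hκ'.ne').integrableOn
    constructor
    · have hi' : IntegrableOn (fun t : ℝ => a κ * ((H (t * ‖κ‖) : ℝ) : ℂ)) (Ioi 0) :=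
        hi.ofReal.const_mul (a κ)
      exact hi'.congr_fun heq measurableSet_Ioi
    · rw [← setIntegral_congr_fun measurableSet_Ioi heq, integral_const_mul, integral_complex_ofReal,
        integral_comp_mul_right_Ioi H 0 hκ']
      simp
      ring
  · intro κ hκ
    have hκ' : 0 < ‖κ‖ := norm_pos_iff.2 hκ
    have heq : ∀ t ∈ Ioi (0:ℝ), ‖a κ * ((H (t * ‖κ‖) : ℝ) : ℂ)‖ =
        ‖(hL0c.mul_left (f := K0)).toSchwartzMap (hK0s.mul hL0s) (t • κ)‖ := by
      intro t ht
      simp only [HasCompactSupport.toSchwartzMap_toFun, hK0, hL0, Pi.mul_apply]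
      rw [hah t κ ht hκ, norm_smul, Real.norm_of_nonneg (le_of_lt ht)]
      simp only [hH]
      push_cast
      ring
    rw [← setIntegral_congr_fun measurableSet_Ioi heq]
    have hn : ∀ t : ℝ, ‖a κ * ((H (t * ‖κ‖) : ℝ) : ℂ)‖ = ‖a κ‖ * H (t * ‖κ‖) := by
      intro t
      rw [norm_mul, Complex.norm_real, Real.norm_of_nonneg]
      simp only [hH]; positivity
    simp_rw [hn]
    rw [integral_const_mul, integral_comp_mul_right_Ioi H 0 hκ']
    simp
    ring

lemma fubini_aux (d : ℕ) (hd : 2 ≤ d) (a : Ed d → ℂ) (M : SchwartzMap (Ed d) ℂ) (c : ℝ) (hc : 0 < c)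
    (hM : ∀ κ, κ ≠ 0 → IntegrableOn (fun t : ℝ => M (t • κ)) (Ioi 0) ∧
        ∫ t in Ioi (0:ℝ), M (t • κ) = c * ((‖κ‖ : ℝ) : ℂ)⁻¹ * a κ)
    (hM' : ∀ κ, κ ≠ 0 → ∫ t in Ioi (0:ℝ), ‖M (t • κ)‖ = c * ‖κ‖⁻¹ * ‖a κ‖)
    (f : SchwartzMap (Ed d) ℂ) (x : Ed d) :
    ENNReal.ofReal c * ‖∫ κ, Complex.exp (Complex.I * (⟪x, κ⟫ : ℂ)) * ((‖κ‖ : ℝ) : ℂ)⁻¹ * a κ *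
            ftransform d (⇑f) κ‖ₑ ≤
      ∫⁻ t in Ioi (0:ℝ),
        ‖∫ κ, Complex.exp (Complex.I * (⟪x, κ⟫ : ℂ)) * M (t • κ) * ftransform d f κ‖ₑ := by
  set Q : Ed d → ℂ := fun κ => Complex.exp (Complex.I * (⟪x, κ⟫ : ℂ)) * ((‖κ‖ : ℝ) : ℂ)⁻¹ * a κ *
            ftransform d (⇑f) κ with hQ
  by_cases hQi : Integrable Q
  swap
  · rw [integral_undef hQi]; simp
  have hfc : Continuous (ftransform d f) := by
    have : ftransform d f = fun κ => (𝓕 f : SchwartzMap (Ed d) ℂ) ((2 * Real.pi)⁻¹ • κ) := by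
      ext κ; rw [ftransform_eq_aux]; rfl
    rw [this]
    exact (𝓕 f : SchwartzMap (Ed d) ℂ).continuous.comp (by fun_prop)
  have : Nonempty (Fin d) := ⟨⟨0, by omega⟩⟩
  have hne : ∀ᵐ κ : Ed d, κ ≠ 0 := by
    simp [ae_iff]
  set G : ℝ → Ed d → ℂ := fun t κ =>
    Complex.exp (Complex.I * (⟪x, κ⟫ : ℂ)) * M (t • κ) * ftransform d f κ with hG
  have hGc : Continuous (Function.uncurry G) := by
    have := M.continuous
    simp only [hG, Function.uncurry_def]
    fun_prop
  have he : ∀ κ : Ed d, ‖Complex.exp (Complex.I * (⟪x, κ⟫ : ℂ))‖ = 1 := by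
    intro κ
    rw [mul_comm, Complex.norm_exp_ofReal_mul_I]
  have hGi : Integrable (Function.uncurry G) ((volume.restrict (Ioi 0)).prod volume) := by
    rw [integrable_prod_iff' hGc.aestronglyMeasurable]
    constructor
    · filter_upwards [hne] with κ hκ
      have h0 : Integrable (fun t : ℝ => M (t • κ)) (volume.restrict (Ioi 0)) := (hM κ hκ).1
      have h1 := (h0.const_mul (Complex.exp (Complex.I * (⟪x, κ⟫ : ℂ)))).mul_const (ftransform d f κ)
      simpa only [Function.uncurry_apply_pair, hG] using h1
    · refine (hQi.norm.const_mul c).congr ?_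
      filter_upwards [hne] with κ hκ
      simp only [Function.uncurry_apply_pair, hG, hQ, norm_mul, he, one_mul]
      rw [integral_mul_const, hM' κ hκ]
      simp
      ring
  have hswap := integral_integral_swap hGi
  have hQc : ∫ κ, ∫ t in Ioi (0:ℝ), G t κ = c * ∫ κ, Q κ := by
    rw [← integral_const_mul]
    apply integral_congr_ae
    filter_upwards [hne] with κ hκ
    simp only [hG, hQ]
    rw [integral_mul_const, integral_const_mul, (hM κ hκ).2]
    ring
  have : ENNReal.ofReal c * ‖∫ κ, Q κ‖ₑ = ‖∫ t in Ioi (0:ℝ), ∫ κ, G t κ‖ₑ := by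
    rw [hswap, hQc, enorm_mul]
    congr 1
    rw [← ofReal_norm, Complex.norm_real, Real.norm_of_nonneg hc.le]
  rw [this]
  exact enorm_integral_le_lintegral_enorm _
end helpers4
section helpers5
open Set Filter Topology

lemma time_aux (V : ℝ → ℝ≥0∞) (C1 C2 G S : ℝ≥0∞) (hC1 : C1 ≠ ⊤) (hC2 : C2 ≠ ⊤) (α β : ℝ)
    (hα : 0 < α) (hβ : 0 < β)
    (h1 : ∀ t, 0 < t → V t ≤ C1 * (ENNReal.ofReal (t ^ (α - 1)) * G))
    (h2 : ∀ t, 0 < t → V t ≤ C2 * (ENNReal.ofReal (t ^ (-1 - β)) * S)) (T : ℝ) (hT : 0 < T) :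
    ∫⁻ t in Ioi (0:ℝ), V t ≤ (C1 * ENNReal.ofReal α⁻¹ + C2 * ENNReal.ofReal β⁻¹) *
      (ENNReal.ofReal (T ^ α) * G + ENNReal.ofReal (T ^ (-β)) * S) := by
  have e1 : ∫⁻ t in Ioc 0 T, ENNReal.ofReal (t ^ (α - 1)) = ENNReal.ofReal (α⁻¹ * T ^ α) := by
    have hi : IntegrableOn (fun t : ℝ => t ^ (α - 1)) (Ioc 0 T) :=
      (intervalIntegrable_iff_integrableOn_Ioc_of_le hT.le).1
        (intervalIntegral.intervalIntegrable_rpow' (by linarith))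
    rw [← ofReal_integral_eq_lintegral_ofReal hi]
    · rw [← intervalIntegral.integral_of_le hT.le, integral_rpow (Or.inl (by linarith))]
      simp [Real.zero_rpow hα.ne']
      congr 1
      field_simp
    · filter_upwards [ae_restrict_mem measurableSet_Ioc] with t ht
      exact Real.rpow_nonneg ht.1.le _
  have e2 : ∫⁻ t in Ioi T, ENNReal.ofReal (t ^ (-1 - β)) = ENNReal.ofReal (β⁻¹ * T ^ (-β)) := by
    rw [← ofReal_integral_eq_lintegral_ofReal (integrableOn_Ioi_rpow_of_lt (by linarith) hT)]
    · rw [integral_Ioi_rpow_of_lt (by linarith) hT]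
      congr 1
      rw [show -1 - β + 1 = -β by ring]
      field_simp
    · filter_upwards [ae_restrict_mem measurableSet_Ioi] with t ht
      exact Real.rpow_nonneg (hT.trans ht).le _
  have m1 : Measurable (fun t : ℝ => ENNReal.ofReal (t ^ (α - 1))) := by fun_prop
  have m2 : Measurable (fun t : ℝ => ENNReal.ofReal (t ^ (-1 - β))) := by fun_prop
  rw [← Ioc_union_Ioi_eq_Ioi hT.le, lintegral_union measurableSet_Ioi
    (Set.disjoint_left.2 fun t h h' => absurd h.2 (not_le.2 h'))]
  have b1 : ∫⁻ t in Ioc 0 T, V t ≤ C1 * ENNReal.ofReal α⁻¹ * (ENNReal.ofReal (T ^ α) * G) := by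
    calc _ ≤ ∫⁻ t in Ioc 0 T, C1 * (ENNReal.ofReal (t ^ (α - 1)) * G) :=
          setLIntegral_mono' measurableSet_Ioc fun t ht => h1 t ht.1
      _ = C1 * (ENNReal.ofReal (α⁻¹ * T ^ α) * G) := by
          rw [lintegral_const_mul' _ _ hC1, lintegral_mul_const _ m1, e1]
      _ = _ := by rw [ENNReal.ofReal_mul (by positivity)]; ring
  have b2 : ∫⁻ t in Ioi T, V t ≤ C2 * ENNReal.ofReal β⁻¹ * (ENNReal.ofReal (T ^ (-β)) * S) := by
    calc _ ≤ ∫⁻ t in Ioi T, C2 * (ENNReal.ofReal (t ^ (-1 - β)) * S) :=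
          setLIntegral_mono' measurableSet_Ioi fun t ht => h2 t (hT.trans ht)
      _ = C2 * (ENNReal.ofReal (β⁻¹ * T ^ (-β)) * S) := by
          rw [lintegral_const_mul' _ _ hC2, lintegral_mul_const _ m2, e2]
      _ = _ := by rw [ENNReal.ofReal_mul (by positivity)]; ring
  refine (add_le_add b1 b2).trans ?_
  rw [add_mul, mul_add, mul_add]
  exact add_le_add le_self_add le_add_self

lemma optim_aux (U K S G : ℝ≥0∞) (hK : K ≠ ⊤) (hS : S ≠ ⊤) (α β : ℝ) (hα : 0 < α) (hβ : 0 < β)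
    (h0 : S = 0 → U = 0)
    (h : ∀ T : ℝ, 0 < T → U ≤ K * (ENNReal.ofReal (T ^ α) * G + ENNReal.ofReal (T ^ (-β)) * S)) :
    U ≤ ENNReal.ofReal (2 * K.toReal + 1) * S ^ (α / (α + β)) * G ^ (1 - α / (α + β)) := by
  have hab : 0 < α + β := by positivity
  have hγ : 1 - α / (α + β) = β / (α + β) := by field_simp; ring
  rw [hγ]
  have hγ1 : 0 < β / (α + β) := by positivity
  have hγ0 : 0 < α / (α + β) := by positivity
  rcases eq_or_ne S 0 with hS0 | hS0
  · rw [h0 hS0]; exact zero_le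
  have hC0 : ENNReal.ofReal (2 * K.toReal + 1) ≠ 0 := by
    simp; positivity
  rcases eq_or_ne G ⊤ with rfl | hG
  · rw [ENNReal.top_rpow_of_pos hγ1, ENNReal.mul_top]
    · exact le_top
    · exact mul_ne_zero hC0 (by simp [ENNReal.rpow_eq_zero_iff, hS0, hS])
  rcases eq_or_ne G 0 with rfl | hG0
  · have ht : Tendsto (fun T : ℝ => K * (ENNReal.ofReal (T ^ (-β)) * S)) atTop (𝓝 (K * (0 * S))) := by
      refine ENNReal.Tendsto.const_mul (ENNReal.Tendsto.mul_const ?_ (Or.inr hS)) (Or.inr hK)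
      have := ENNReal.tendsto_ofReal (tendsto_rpow_neg_atTop hβ)
      simpa using this
    have : U ≤ K * (0 * S) := by
      refine ge_of_tendsto ht ?_
      filter_upwards [eventually_gt_atTop 0] with T hT
      simpa using h T hT
    simp at this
    rw [this]; exact zero_le
  set s := S.toReal with hs
  set g := G.toReal with hg
  have hs0 : 0 < s := ENNReal.toReal_pos hS0 hS
  have hg0 : 0 < g := ENNReal.toReal_pos hG0 hG
  have hSs : S = ENNReal.ofReal s := (ENNReal.ofReal_toReal hS).symm
  have hGg : G = ENNReal.ofReal g := (ENNReal.ofReal_toReal hG).symm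
  have hT := h ((s / g) ^ (1 / (α + β))) (by positivity)
  have t1 : ((s / g) ^ (1 / (α + β))) ^ α * g = s ^ (α / (α + β)) * g ^ (β / (α + β)) := by
    rw [← Real.rpow_mul (by positivity), Real.div_rpow hs0.le hg0.le,
      show 1 / (α + β) * α = α / (α + β) by ring, div_mul_eq_mul_div, mul_div_assoc]
    congr 1
    rw [div_eq_iff (by positivity), ← Real.rpow_add hg0]
    rw [show β / (α + β) + α / (α + β) = 1 by field_simp; ring, Real.rpow_one]
  have t2 : ((s / g) ^ (1 / (α + β))) ^ (-β) * s = s ^ (α / (α + β)) * g ^ (β / (α + β)) := by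
    rw [← Real.rpow_mul (by positivity), show 1 / (α + β) * -β = - (β / (α + β)) by ring,
      Real.rpow_neg (by positivity), Real.div_rpow hs0.le hg0.le, inv_div, div_mul_eq_mul_div,
      div_eq_iff (by positivity)]
    have e : s ^ (α / (α + β)) * s ^ (β / (α + β)) = s := by
      rw [← Real.rpow_add hs0, show α / (α + β) + β / (α + β) = 1 by field_simp, Real.rpow_one]
    linear_combination (- g ^ (β / (α + β))) * e
  refine hT.trans ?_
  rw [hSs, hGg, ← ENNReal.ofReal_mul (by positivity), ← ENNReal.ofReal_mul (by positivity), t1, t2,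
    ENNReal.ofReal_rpow_of_pos hs0, ENNReal.ofReal_rpow_of_pos hg0, mul_assoc,
    ← ENNReal.ofReal_mul (by positivity)]
  nth_rewrite 1 [← ENNReal.ofReal_toReal hK]
  rw [← ENNReal.ofReal_add (by positivity) (by positivity), ← ENNReal.ofReal_mul (by positivity),
    ← ENNReal.ofReal_mul (by positivity)]
  apply ENNReal.ofReal_le_ofReal
  have : 0 ≤ s ^ (α / (α + β)) * g ^ (β / (α + β)) := by positivity
  nlinarith
end helpers5

/-- For a symbol `a ∈ S⁰_{ph}` in dimension `d ≥ 2`, `0 < r < 1`,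
`2 ≤ p < ∞` with `r > d/p − 1`, and `γ₂ = (r + 1 − d/p)/(r + 1 + d(p−2)/(2p))`, the
function `D^{-1}𝔞[f](x) = (2π)^{-d} ∫ e^{i x·κ} |κ|^{-1} a(κ) f̂(κ) dκ` satisfies
`‖D^{-1}𝔞[f]‖_∞ ≤ C [f]_{−1}^{γ₂} [f]_{r,p}^{1−γ₂}`. -/
theorem stmt7 (d : ℕ) (hd : 2 ≤ d) (r p : ℝ) (hr0 : 0 < r) (hr1 : r < 1) (hp : 2 ≤ p)
    (hrp : r > d / p - 1) (a : Ed d → ℂ) (ha : IsSymbol0 d a) :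
    ∃ C : ℝ, 0 < C ∧ ∀ f : SchwartzMap (Ed d) ℂ,
      sobolevSemi d (-1) ⇑f ≠ ⊤ →
      (⨆ x, (‖(((2 * Real.pi) ^ (-(d : ℝ)) : ℝ) : ℂ) *
          ∫ κ, Complex.exp (Complex.I * (⟪x, κ⟫ : ℂ)) * ((‖κ‖ : ℝ) : ℂ)⁻¹ * a κ *
            ftransform d (⇑f) κ‖₊ : ℝ≥0∞))
        ≤ ENNReal.ofReal C *
            sobolevSemi d (-1) ⇑f ^ ((r + 1 - d / p) / (r + 1 + d * (p - 2) / (2 * p))) *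
            gagliardo d r p ⇑f ^ (1 - (r + 1 - d / p) / (r + 1 + d * (p - 2) / (2 * p))) := by
  have hp0 : 0 < p := by linarith
  have hd0 : (0:ℝ) < d := by exact_mod_cast (by omega : 0 < d)
  obtain ⟨k, l, M, c, hc, hk, hM0, hMkl, hMi, hMn⟩ := symbol_pieces_aux d a ha
  obtain ⟨C1, hC1, hB⟩ := key_scaled_aux d r p hr0 hp k l M hMkl hk
  obtain ⟨C2, hC2, hA⟩ := key_low_aux d M hM0
  set α : ℝ := r + 1 - d / p with hα
  set β : ℝ := (d : ℝ) / 2 with hβ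
  have hα0 : 0 < α := by rw [hα]; linarith
  have hβ0 : 0 < β := by rw [hβ]; positivity
  have hab : r + 1 + d * (p - 2) / (2 * p) = α + β := by
    rw [hα, hβ]; field_simp; ring
  rw [hab]
  set K1 : ℝ≥0∞ := C1 * ENNReal.ofReal α⁻¹ + C2 * ENNReal.ofReal β⁻¹ with hK1
  have hK1t : K1 ≠ ⊤ := ENNReal.add_ne_top.2
    ⟨ENNReal.mul_ne_top hC1 (by simp), ENNReal.mul_ne_top hC2 (by simp)⟩
  set w : ℝ≥0∞ := ENNReal.ofReal ((2 * Real.pi) ^ (-(d : ℝ))) * (ENNReal.ofReal c)⁻¹ with hw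
  have hc0 : ENNReal.ofReal c ≠ 0 := by simpa using hc
  have hwt : w ≠ ⊤ := ENNReal.mul_ne_top (by simp) (by simpa using hc)
  set K : ℝ≥0∞ := w * K1 with hK
  have hKt : K ≠ ⊤ := ENNReal.mul_ne_top hwt hK1t
  refine ⟨2 * K.toReal + 1, by positivity, ?_⟩
  intro f hS
  refine iSup_le fun x => ?_
  rw [← enorm_eq_nnnorm]
  set Z := ∫ κ, Complex.exp (Complex.I * (⟪x, κ⟫ : ℂ)) * ((‖κ‖ : ℝ) : ℂ)⁻¹ * a κ *
            ftransform d (⇑f) κ with hZ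
  set V : ℝ → ℝ≥0∞ := fun t =>
    ‖∫ κ, Complex.exp (Complex.I * (⟪x, κ⟫ : ℂ)) * M (t • κ) * ftransform d f κ‖ₑ with hV
  have hfub : ENNReal.ofReal c * ‖Z‖ₑ ≤ ∫⁻ t in Set.Ioi (0:ℝ), V t :=
    fubini_aux d hd a M c hc hMi hMn f x
  have hU : ‖(((2 * Real.pi) ^ (-(d : ℝ)) : ℝ) : ℂ) * Z‖ₑ ≤ w * ∫⁻ t in Set.Ioi (0:ℝ), V t := by
    rw [enorm_mul, ← ofReal_norm, Complex.norm_real, Real.norm_of_nonneg (by positivity), hw, mul_assoc]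
    gcongr
    calc ‖Z‖ₑ = (ENNReal.ofReal c)⁻¹ * (ENNReal.ofReal c * ‖Z‖ₑ) := by
          rw [← mul_assoc, ENNReal.inv_mul_cancel hc0 (by simp), one_mul]
      _ ≤ _ := by gcongr
  have hV1 : ∀ t, 0 < t → V t ≤ C1 * (ENNReal.ofReal (t ^ (α - 1)) * gagliardo d r p f) := by
    intro t ht
    have := hB f x t ht
    rwa [show r - d / p = α - 1 by rw [hα]; ring] at this
  have hV2 : ∀ t, 0 < t → V t ≤ C2 * (ENNReal.ofReal (t ^ (-1 - β)) * sobolevSemi d (-1) f) :=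
    fun t ht => hA f x t ht
  refine optim_aux _ K _ _ hKt hS α β hα0 hβ0 ?_ ?_
  · intro hS0
    have h0 : ∫⁻ t in Set.Ioi (0:ℝ), V t = 0 := by
      rw [← nonpos_iff_eq_zero]
      calc _ ≤ ∫⁻ t in Set.Ioi (0:ℝ), 0 := by
            refine setLIntegral_mono' measurableSet_Ioi fun t ht => ?_
            have := hV2 t ht
            rw [hS0] at this
            simpa using this
        _ = 0 := by simp
    rw [h0, mul_zero] at hU
    exact nonpos_iff_eq_zero.1 hU
  · intro T hT
    refine hU.trans ?_
    exact (mul_le_mul' le_rfl (time_aux V C1 C2 _ _ hC1 hC2 α β hα0 hβ0 hV1 hV2 T hT)).trans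
      (mul_assoc _ _ _).ge
end

section
/- Let 0 < r < 1. There exists a constant C, depending only on r, such that for every Schwartz vector field v = (v¹, v²) : ℝ² → ℝ² with div v = 0 and vorticity ω = ∂₁v² − ∂₂v¹, one has both ‖∇v‖_{L^∞} ≤ C · ‖v‖_{L²}^{r/(r+2)} · {ω}_r^{2/(r+2)} and ‖ω‖_{L^∞} ≤ C · ‖v‖_{L²}^{r/(r+2)} · {ω}_r^{2/(r+2)}, where ‖∇v‖_{L^∞} is the supremum over x of the norm of the Jacobian matrix of v. -/
open MeasureTheory ENNReal
open scoped RealInnerProductSpace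

open scoped LineDeriv SchwartzMap Topology ContDiff

namespace Vort

noncomputable section

/-- standard basis vector -/
abbrev e (k : Fin 2) : Ed 2 := EuclideanSpace.single k 1

lemma bdd (f : 𝓢(Ed 2, ℝ)) : ∃ M : ℝ, 0 ≤ M ∧ ∀ x, ‖f x‖ ≤ M :=
  ⟨SchwartzMap.seminorm ℝ 0 0 f, apply_nonneg _ _, f.norm_le_seminorm ℝ⟩

lemma integrable_shift (f g : 𝓢(Ed 2, ℝ)) (x : Ed 2) (s : ℝ) :
    Integrable (fun y => f (x + s • y) * g y) := by
  obtain ⟨M, -, hM⟩ := bdd f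
  refine g.integrable.bdd_mul (c := M) ?_ (Filter.Eventually.of_forall fun y => hM _)
  exact (f.continuous.comp (by fun_prop)).aestronglyMeasurable

lemma fderiv_shift (f : 𝓢(Ed 2, ℝ)) (x : Ed 2) (s : ℝ) (y w : Ed 2) :
    fderiv ℝ (fun y => f (x + s • y)) y w = s * (∂_{w} f) (x + s • y) := by
  have h1 : HasFDerivAt (fun y : Ed 2 => x + s • y) (s • ContinuousLinearMap.id ℝ (Ed 2)) y :=
    ((hasFDerivAt_id y).const_smul s).const_add x
  have h2 := (f.differentiableAt (x := x + s • y)).hasFDerivAt.comp y h1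
  have h3 := h2.fderiv
  simp only [Function.comp_def] at h3
  rw [h3, SchwartzMap.lineDerivOp_apply_eq_fderiv]
  simp

lemma ibp (f g : 𝓢(Ed 2, ℝ)) (x : Ed 2) (s : ℝ) (w : Ed 2) :
    ∫ y, f (x + s • y) * (∂_{w} g) y = - (s * ∫ y, (∂_{w} f) (x + s • y) * g y) := by
  have h := integral_mul_fderiv_eq_neg_fderiv_mul_of_integrable (μ := volume)
    (f := fun y => f (x + s • y)) (g := g) (v := w) ?_ ?_ ?_ ?_ ?_
  · simp only [fderiv_shift] at h
    simp only [SchwartzMap.lineDerivOp_apply_eq_fderiv w g]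
    rw [h, ← integral_const_mul]
    simp only [mul_assoc]
  · simp only [fderiv_shift, mul_assoc]
    exact (integrable_shift _ _ _ _).const_mul s
  · exact integrable_shift f (∂_{w} g) x s
  · exact integrable_shift _ _ _ _
  · intro y _
    exact (f.differentiable.comp (by fun_prop : Differentiable ℝ fun y : Ed 2 => x + s • y)) y
  · intro y _
    exact g.differentiableAt

lemma integral_D (g : 𝓢(Ed 2, ℝ)) (w : Ed 2) : ∫ y, (∂_{w} g) y = 0 := by
  have := integral_mul_fderiv_eq_neg_fderiv_mul_of_integrable (μ := volume)
    (f := fun _ : Ed 2 => (1:ℝ)) (g := g) (v := w) (by simp)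
    (by simpa using (∂_{w} g).integrable) (by simpa using g.integrable) (by simp)
    (fun y _ => g.differentiableAt)
  simpa [SchwartzMap.lineDerivOp_apply_eq_fderiv] using this

lemma D_comm (f : 𝓢(Ed 2, ℝ)) (a b : Ed 2) : ∂_{a} (∂_{b} f) = ∂_{b} (∂_{a} f) := by
  ext x
  have key : ∀ a b : Ed 2, (∂_{a} (∂_{b} f)) x = fderiv ℝ (fderiv ℝ f) x a b := by
    intro a b
    rw [SchwartzMap.lineDerivOp_apply_eq_fderiv]
    have : (⇑(∂_{b} f : 𝓢(Ed 2, ℝ)) : Ed 2 → ℝ) = fun y => fderiv ℝ f y b := by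
      ext y; rw [SchwartzMap.lineDerivOp_apply_eq_fderiv]
    rw [this]
    have hd : DifferentiableAt ℝ (fderiv ℝ f) x :=
      ((f.smooth 2).fderiv_right (m := 1) (by norm_num)).differentiable (by norm_num) x
    rw [fderiv_clm_apply hd (by fun_prop)]
    simp
  rw [key, key]
  exact (((f.smooth 2).contDiffAt).isSymmSndFDerivAt (by simp)) a b

lemma hasDeriv_F (p G : 𝓢(Ed 2, ℝ)) (x : Ed 2) (s : ℝ) :
    HasDerivAt (fun s : ℝ => ∫ y, p (x + s • y) * G y)
      (∫ y, (fderiv ℝ p (x + s • y) y) * G y) s := by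
  set M := SchwartzMap.seminorm ℝ 0 1 p
  have hM : ∀ z, ‖fderiv ℝ p z‖ ≤ M := fun z => by
    have := p.norm_iteratedFDeriv_le_seminorm ℝ 1 z
    rwa [norm_iteratedFDeriv_one] at this
  have hc : Continuous (fderiv ℝ p) := (p.smooth 1).continuous_fderiv (by norm_num)
  refine (hasDerivAt_integral_of_dominated_loc_of_deriv_le (s := Set.univ)
    (F := fun t y => p (x + t • y) * G y) (x₀ := s) (μ := volume)
    (F' := fun t y => (fderiv ℝ p (x + t • y) y) * G y)
    (bound := fun y => M * (‖y‖ ^ 1 * ‖G y‖))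
    Filter.univ_mem ?_ (integrable_shift p G x s) ?_ ?_ ?_ ?_).2
  · exact Filter.Eventually.of_forall fun s => (integrable_shift p G x s).aestronglyMeasurable
  · refine (Continuous.mul ?_ G.continuous).aestronglyMeasurable
    exact (hc.comp (by fun_prop)).clm_apply continuous_id
  · refine Filter.Eventually.of_forall fun y t _ => ?_
    rw [norm_mul, pow_one, ← mul_assoc]
    gcongr
    exact (ContinuousLinearMap.le_opNorm _ _).trans (by gcongr; exact hM _)
  · exact (G.integrable_pow_mul volume 1).const_mul M
  · refine Filter.Eventually.of_forall fun y t _ => ?_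
    have h1 : HasDerivAt (fun t : ℝ => x + t • y) y t := by
      simpa using ((hasDerivAt_id t).smul_const y).const_add x
    exact ((p.differentiableAt.hasFDerivAt).comp_hasDerivAt t h1).mul_const _

lemma sum_basis (y : Ed 2) : y = y 0 • e 0 + y 1 • e 1 := by
  ext i; fin_cases i <;> simp [e]

/-- The derivative formula. -/
lemma deriv_eq (p G Γ om : 𝓢(Ed 2, ℝ)) (c : ℝ) (a b : Ed 2)
    (hG : ∀ y k, y k * G y = - (∂_{e k} Γ) y)
    (hp : ∀ x, (∂_{e 0} (∂_{e 0} p)) x + (∂_{e 1} (∂_{e 1} p)) x = c * (∂_{a} (∂_{b} om)) x)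
    (x : Ed 2) (s : ℝ) :
    s * ∫ y, (fderiv ℝ p (x + s • y) y) * G y
      = c * ∫ y, (om (x + s • y) - om x) * (∂_{b} (∂_{a} Γ)) y := by
  have h1 : ∀ y, (fderiv ℝ p (x + s • y) y) * G y
      = - ((∂_{e 0} p) (x + s • y) * (∂_{e 0} Γ) y) - (∂_{e 1} p) (x + s • y) * (∂_{e 1} Γ) y := by
    intro y
    have : fderiv ℝ p (x + s • y) y
        = y 0 * (∂_{e 0} p) (x + s • y) + y 1 * (∂_{e 1} p) (x + s • y) := by
      conv_lhs => rw [sum_basis y]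
      simp only [map_add, map_smul, SchwartzMap.lineDerivOp_apply_eq_fderiv, smul_eq_mul]
      rw [← sum_basis y]
    rw [this]
    linear_combination (∂_{e 0} p) (x + s • y) * hG y 0 + (∂_{e 1} p) (x + s • y) * hG y 1
  have h2 : ∫ y, (fderiv ℝ p (x + s • y) y) * G y
      = s * (c * ∫ y, (∂_{a} (∂_{b} om)) (x + s • y) * Γ y) := by
    simp only [h1]
    rw [integral_sub (integrable_shift (∂_{e 0} p) (∂_{e 0} Γ) x s).fun_neg
      (integrable_shift _ _ _ _), integral_neg,
      ibp, ibp]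
    have : ∀ y, c * ((∂_{a} (∂_{b} om)) (x + s • y) * Γ y)
      = (∂_{e 0} (∂_{e 0} p)) (x + s • y) * Γ y + (∂_{e 1} (∂_{e 1} p)) (x + s • y) * Γ y := by
      intro y; linear_combination (- Γ y) * hp (x + s • y)
    rw [← integral_const_mul (μ := volume) c]
    simp only [this]
    rw [integral_add (integrable_shift _ _ _ _) (integrable_shift _ _ _ _)]
    ring
  have h3 : ∫ y, (om (x + s • y) - om x) * (∂_{b} (∂_{a} Γ)) y
      = ∫ y, om (x + s • y) * (∂_{b} (∂_{a} Γ)) y := by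
    simp only [sub_mul]
    rw [integral_sub (integrable_shift _ _ _ _) ((SchwartzMap.integrable _).const_mul _),
      integral_const_mul, integral_D]
    simp
  rw [h2, h3, ibp]
  have := ibp (∂_{b} om) Γ x s a
  rw [this]; ring


lemma exists_kernel : ∃ G Γ : 𝓢(Ed 2, ℝ), (∀ y k, y k * G y = - (∂_{e k} Γ) y) ∧
    0 < ∫ y, G y := by
  set φ : ℝ → ℝ := fun s => Real.smoothTransition (2 - s) with hφ
  have hφs : ContDiff ℝ ∞ φ := Real.smoothTransition.contDiff.comp (by fun_prop)
  have hφd : ContDiff ℝ ∞ (deriv φ) := (contDiff_infty_iff_deriv.1 hφs).2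
  have hφ0 : ∀ s, 2 ≤ s → φ s = 0 := fun s hs =>
    Real.smoothTransition.zero_of_nonpos (by linarith)
  have hd0 : ∀ s, 2 < s → deriv φ s = 0 := fun s hs => by
    have : φ =ᶠ[𝓝 s] fun _ => 0 := by
      filter_upwards [lt_mem_nhds hs] with t ht using hφ0 t ht.le
    rw [this.deriv_eq]; simp
  have hdneg : ∀ s, deriv φ s ≤ 0 := fun s => by
    have : Antitone φ := fun a b hab => Real.smoothTransition.monotone (by linarith)
    exact this.deriv_nonpos
  have hcs : ∀ h : ℝ → ℝ, (∀ s, 2 < s → h s = 0) →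
      HasCompactSupport (fun y : Ed 2 => h (‖y‖ ^ 2)) := by
    intro h hh
    refine HasCompactSupport.intro (isCompact_closedBall (0 : Ed 2) 2) fun y hy => hh _ ?_
    simp only [Metric.mem_closedBall, dist_zero_right, not_le] at hy
    nlinarith
  have hn : ContDiff ℝ ∞ (fun y : Ed 2 => ‖y‖ ^ 2) := contDiff_norm_sq ℝ
  have hc1 : HasCompactSupport (fun y : Ed 2 => φ (‖y‖ ^ 2)) :=
    hcs φ fun s hs => hφ0 s hs.le
  have hc2 : HasCompactSupport (fun y : Ed 2 => (fun s => -2 * deriv φ s) (‖y‖ ^ 2)) :=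
    hcs (fun s => -2 * deriv φ s) fun s hs => by simp [hd0 s hs]
  have hs2 : ContDiff ℝ ∞ (fun y : Ed 2 => (fun s => -2 * deriv φ s) (‖y‖ ^ 2)) :=
    contDiff_const.mul (hφd.comp hn)
  refine ⟨hc2.toSchwartzMap hs2, hc1.toSchwartzMap (hφs.comp hn), ?_, ?_⟩
  · intro y k
    rw [SchwartzMap.lineDerivOp_apply_eq_fderiv]
    have h1 : HasFDerivAt (fun y : Ed 2 => φ (‖y‖ ^ 2))
        (deriv φ (‖y‖ ^ 2) • (2 • (innerSL ℝ y))) y := by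
      have hd : HasDerivAt φ (deriv φ (‖y‖ ^ 2)) (‖y‖ ^ 2) :=
        (hφs.differentiable (by simp) _).hasDerivAt
      exact hd.comp_hasFDerivAt y (hasStrictFDerivAt_norm_sq y).hasFDerivAt
    have h2 : fderiv ℝ (⇑(hc1.toSchwartzMap (hφs.comp hn))) y = _ := h1.fderiv
    rw [h2]
    simp [e, EuclideanSpace.inner_single_right]
    ring
  · have hcont : Continuous fun y : Ed 2 => (fun s => -2 * deriv φ s) (‖y‖ ^ 2) := hs2.continuous
    obtain ⟨s, hs0, hs⟩ : ∃ s, 0 < s ∧ deriv φ s ≠ 0 := by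
      by_contra! hcon
      obtain ⟨c, hc, hc'⟩ := exists_deriv_eq_slope φ (show (0:ℝ) < 2 by norm_num)
        hφs.continuous.continuousOn (hφs.differentiable (by simp)).differentiableOn
      rw [hcon c hc.1] at hc'
      have h2 : φ 2 = 0 := hφ0 2 le_rfl
      have h1 : φ 0 = 1 := Real.smoothTransition.one_of_one_le (by norm_num)
      rw [h2, h1] at hc'
      norm_num at hc'
    have hy : ‖(EuclideanSpace.single 0 (√s) : Ed 2)‖ ^ 2 = s := by
      simp [Real.sq_sqrt hs0.le]
    refine hcont.integral_pos_of_hasCompactSupport_nonneg_nonzero hc2 ?_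
      (x := EuclideanSpace.single 0 (√s)) ?_
    · intro y
      have := hdneg (‖y‖ ^ 2)
      change 0 ≤ -2 * deriv φ (‖y‖ ^ 2)
      linarith
    · change -2 * deriv φ (‖(EuclideanSpace.single 0 (√s) : Ed 2)‖ ^ 2) ≠ 0
      rw [hy]
      exact mul_ne_zero (by norm_num) hs

/-- Cauchy-Schwarz and scaling. -/
lemma l2_bound (v : 𝓢(Ed 2, Ed 2)) (g : 𝓢(Ed 2, ℝ)) (x : Ed 2) (R : ℝ) (hR : 0 < R) :
    ∫ y, ‖v (x + R • y)‖ * ‖g y‖ ≤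
      R⁻¹ * (eLpNorm v 2 volume).toReal * (eLpNorm g 2 volume).toReal := by
  have hv : MemLp v 2 volume := v.memLp 2
  have hg : MemLp g 2 volume := g.memLp 2
  have hvi : Integrable (fun y => ‖v y‖ ^ 2) := hv.integrable_norm_pow (by norm_num)
  have hv2 : Integrable (fun y => ‖v (x + R • y)‖ ^ 2) :=
    (hvi.comp_add_left x).comp_smul hR.ne'
  have hm : MemLp (fun y => ‖v (x + R • y)‖) 2 volume := by
    rw [memLp_two_iff_integrable_sq]
    · exact hv2
    · exact (v.continuous.comp (by fun_prop)).norm.aestronglyMeasurable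
  have h := integral_mul_le_Lp_mul_Lq_of_nonneg (μ := volume) Real.HolderConjugate.two_two
    (f := fun y => ‖v (x + R • y)‖) (g := fun y => ‖g y‖)
    (Filter.Eventually.of_forall fun y => norm_nonneg _)
    (Filter.Eventually.of_forall fun y => norm_nonneg _)
    (by simpa using hm) (by simpa using hg.norm)
  have e1 : ∫ y, ‖v (x + R • y)‖ ^ (2:ℝ) = (R ^ 2)⁻¹ * ∫ y, ‖v y‖ ^ (2:ℝ) := by
    have := Measure.integral_comp_smul_of_nonneg volume (fun y => ‖v (x + y)‖ ^ (2:ℝ)) R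
      (hR := hR.le)
    rw [this, integral_add_left_eq_self (fun y => ‖v y‖ ^ (2:ℝ)) x]
    simp
  have e2 : (eLpNorm v 2 volume).toReal = (∫ y, ‖v y‖ ^ (2:ℝ)) ^ (1 / (2:ℝ)) := by
    rw [hv.eLpNorm_eq_integral_rpow_norm (by norm_num) (by norm_num), ENNReal.toReal_ofReal]
    · simp
    · positivity
  have e3 : (eLpNorm g 2 volume).toReal = (∫ y, ‖g y‖ ^ (2:ℝ)) ^ (1 / (2:ℝ)) := by
    rw [hg.eLpNorm_eq_integral_rpow_norm (by norm_num) (by norm_num), ENNReal.toReal_ofReal]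
    · simp
    · positivity
  rw [e2, e3]
  refine h.trans_eq ?_
  rw [e1, Real.mul_rpow (by positivity) (by positivity)]
  congr 2
  rw [← Real.sqrt_eq_rpow, Real.sqrt_inv, Real.sqrt_sq hR.le]

/-- Hölder bound for the remainder. -/
lemma holder_bound (om g : 𝓢(Ed 2, ℝ)) (r H : ℝ) (hr0 : 0 < r) (hr1 : r < 1) (hH : 0 ≤ H)
    (hom : ∀ x y, |om x - om y| ≤ H * ‖x - y‖ ^ r) (x : Ed 2) (s : ℝ) (hs : 0 < s) :
    |∫ y, (om (x + s • y) - om x) * g y| ≤ H * s ^ r * ∫ y, (‖y‖ ^ 0 * ‖g y‖ + ‖y‖ ^ 1 * ‖g y‖) := by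
  rw [← integral_const_mul, ← Real.norm_eq_abs]
  refine norm_integral_le_of_norm_le
    (((g.integrable_pow_mul volume 0).add (g.integrable_pow_mul volume 1)).const_mul _) ?_
  refine Filter.Eventually.of_forall fun y => ?_
  have h1 := hom (x + s • y) x
  rw [add_sub_cancel_left, norm_smul, Real.norm_of_nonneg hs.le,
    Real.mul_rpow hs.le (norm_nonneg _)] at h1
  have h2 : ‖y‖ ^ r ≤ 1 + ‖y‖ := by
    rcases le_total ‖y‖ 1 with h | h
    · have := Real.rpow_le_one (norm_nonneg y) h hr0.le
      linarith [norm_nonneg y]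
    · have := Real.rpow_le_rpow_of_exponent_le h hr1.le
      rw [Real.rpow_one] at this
      linarith
  have hs' : 0 ≤ s ^ r := Real.rpow_nonneg hs.le r
  rw [norm_mul, Real.norm_eq_abs]
  calc |om (x + s • y) - om x| * ‖g y‖ ≤ (H * (s ^ r * (1 + ‖y‖))) * ‖g y‖ := by
        gcongr
        exact h1.trans (by gcongr)
    _ = _ := by ring


lemma core_diff (p G Γ om : 𝓢(Ed 2, ℝ)) (c : ℝ) (hc : |c| ≤ 1) (a b : Ed 2)
    (hG : ∀ y k, y k * G y = - (∂_{e k} Γ) y)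
    (hp : ∀ x, (∂_{e 0} (∂_{e 0} p)) x + (∂_{e 1} (∂_{e 1} p)) x = c * (∂_{a} (∂_{b} om)) x)
    (r H : ℝ) (hr0 : 0 < r) (hr1 : r < 1) (hH : 0 ≤ H)
    (hom : ∀ x y, |om x - om y| ≤ H * ‖x - y‖ ^ r)
    (K : ℝ) (hK : ∫ y, (‖y‖ ^ 0 * ‖(∂_{b} (∂_{a} Γ)) y‖ + ‖y‖ ^ 1 * ‖(∂_{b} (∂_{a} Γ)) y‖) ≤ K)
    (x : Ed 2) (R : ℝ) (hR : 0 < R) :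
    |p x * ∫ y, G y| ≤ |∫ y, p (x + R • y) * G y| + K / r * (H * R ^ r) := by
  set F : ℝ → ℝ := fun s => ∫ y, p (x + s • y) * G y with hF
  set F' : ℝ → ℝ := fun s => ∫ y, (fderiv ℝ p (x + s • y) y) * G y with hF'
  have hd : ∀ s, HasDerivAt F (F' s) s := fun s => hasDeriv_F p G x s
  have hF0 : F 0 = p x * ∫ y, G y := by simp [hF, integral_const_mul]
  have hb : ∀ s, 0 < s → |F' s| ≤ K * H * s ^ (r - 1) := by
    intro s hs
    have h1 := deriv_eq p G Γ om c a b hG hp x s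
    have h2 := holder_bound om (∂_{b} (∂_{a} Γ)) r H hr0 hr1 hH hom x s hs
    have hsr : 0 < s ^ r := Real.rpow_pos_of_pos hs r
    have h3 : s * |F' s| ≤ H * s ^ r * K := by
      rw [← abs_of_pos hs, ← abs_mul, abs_of_pos hs]
      change |s * ∫ y, (fderiv ℝ p (x + s • y) y) * G y| ≤ _
      rw [h1, abs_mul]
      calc _ ≤ 1 * |∫ y, (om (x + s • y) - om x) * (∂_{b} (∂_{a} Γ)) y| := by gcongr
        _ ≤ _ := by
          rw [one_mul]
          exact h2.trans (by gcongr)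
    rw [Real.rpow_sub_one hs.ne', ← mul_div_assoc, le_div_iff₀ hs]
    linarith
  set B : ℝ → ℝ := fun s => K * H / r * s ^ r with hB
  have hBd : ∀ s, 0 < s → HasDerivAt B (K * H * s ^ (r - 1)) s := by
    intro s hs
    have := (Real.hasDerivAt_rpow_const (x := s) (p := r) (Or.inl hs.ne')).const_mul (K * H / r)
    convert! this using 1
    field_simp
  have hBc : Continuous B := continuous_const.mul (Real.continuous_rpow_const hr0.le)
  have hFc : Continuous F := continuous_iff_continuousAt.2 fun s => (hd s).continuousAt
  have hB0 : B 0 = 0 := by simp [hB, Real.zero_rpow hr0.ne']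
  have key : ∀ σ : ℝ, |σ| ≤ 1 → MonotoneOn (fun s => B s + σ * F s) (Set.Icc 0 R) := by
    intro σ hσ
    have hder : ∀ s ∈ interior (Set.Icc 0 R),
        HasDerivAt (fun s => B s + σ * F s) (K * H * s ^ (r - 1) + σ * F' s) s := by
      intro s hs
      rw [interior_Icc] at hs
      exact (hBd s hs.1).add ((hd s).const_mul σ)
    refine monotoneOn_of_deriv_nonneg (convex_Icc 0 R)
      (hBc.add (continuous_const.mul hFc)).continuousOn
      (fun s hs => (hder s hs).differentiableAt.differentiableWithinAt) ?_
    intro s hs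
    rw [(hder s hs).deriv]
    rw [interior_Icc] at hs
    have h1 := hb s hs.1
    have h2 : |σ * F' s| ≤ |F' s| := by
      rw [abs_mul]
      exact mul_le_of_le_one_left (abs_nonneg _) hσ
    have := neg_abs_le (σ * F' s)
    linarith
  have m0 : (0:ℝ) ∈ Set.Icc 0 R := ⟨le_rfl, hR.le⟩
  have mR : R ∈ Set.Icc 0 R := ⟨hR.le, le_rfl⟩
  have k1 := key 1 (by simp) m0 mR hR.le
  have k2 := key (-1) (by simp) m0 mR hR.le
  simp only [hB0] at k1 k2
  have hBR : B R = K / r * (H * R ^ r) := by simp only [hB]; ring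
  rw [← hF0, ← hBR]
  have := le_abs_self (F R)
  have := neg_abs_le (F R)
  rw [abs_le]
  constructor <;> linarith

/-- components as Schwartz maps -/
def comp (v : 𝓢(Ed 2, Ed 2)) (i : Fin 2) : 𝓢(Ed 2, ℝ) :=
  SchwartzMap.postcompCLM (𝕜 := ℝ) (EuclideanSpace.proj i : Ed 2 →L[ℝ] ℝ) v

lemma comp_apply (v : 𝓢(Ed 2, Ed 2)) (i : Fin 2) (x : Ed 2) : comp v i x = v x i := rfl

lemma pd_eq (v : 𝓢(Ed 2, Ed 2)) (i j : Fin 2) (x : Ed 2) :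
    pd 2 j (fun y => v y i) x = (∂_{e j} (comp v i)) x := by
  rw [SchwartzMap.lineDerivOp_apply_eq_fderiv]; rfl

lemma fderiv_comp (v : 𝓢(Ed 2, Ed 2)) (i j : Fin 2) (x : Ed 2) :
    (fderiv ℝ v x (e j)) i = (∂_{e j} (comp v i)) x := by
  rw [SchwartzMap.lineDerivOp_apply_eq_fderiv]
  have h := ((EuclideanSpace.proj i : Ed 2 →L[ℝ] ℝ).hasFDerivAt.comp x
    (v.differentiableAt (x := x)).hasFDerivAt).fderiv
  have h' : fderiv ℝ (⇑(comp v i)) x = _ := h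
  rw [h']; rfl

/-- the vorticity as a Schwartz map -/
def vort (v : 𝓢(Ed 2, Ed 2)) : 𝓢(Ed 2, ℝ) := ∂_{e 0} (comp v 1) - ∂_{e 1} (comp v 0)

lemma norm_fderiv_le (v : 𝓢(Ed 2, Ed 2)) (x : Ed 2) (N : ℝ)
    (hN : ∀ i j, |(∂_{e j} (comp v i)) x| ≤ N) : ‖fderiv ℝ v x‖ ≤ 4 * N := by
  have hN0 : 0 ≤ N := (abs_nonneg _).trans (hN 0 0)
  have h1 : ∀ j, ‖fderiv ℝ v x (e j)‖ ≤ 2 * N := by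
    intro j
    set z := fderiv ℝ v x (e j) with hz
    have h0 : |z 0| ≤ N := by rw [hz, fderiv_comp]; exact hN 0 j
    have h1 : |z 1| ≤ N := by rw [hz, fderiv_comp]; exact hN 1 j
    calc ‖z‖ = ‖z 0 • e 0 + z 1 • e 1‖ := by rw [← sum_basis z]
      _ ≤ ‖z 0 • e 0‖ + ‖z 1 • e 1‖ := norm_add_le _ _
      _ = |z 0| + |z 1| := by simp [norm_smul, e]
      _ ≤ 2 * N := by linarith
  refine ContinuousLinearMap.opNorm_le_bound _ (by positivity) fun w => ?_
  have hw : ∀ k, |w k| ≤ ‖w‖ := fun k => PiLp.norm_apply_le w k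
  calc ‖fderiv ℝ v x w‖ = ‖w 0 • fderiv ℝ v x (e 0) + w 1 • fderiv ℝ v x (e 1)‖ := by
        conv_lhs => rw [sum_basis w]
        rw [map_add, map_smul, map_smul]
    _ ≤ |w 0| * ‖fderiv ℝ v x (e 0)‖ + |w 1| * ‖fderiv ℝ v x (e 1)‖ := by
        refine (norm_add_le _ _).trans_eq ?_
        simp [norm_smul]
    _ ≤ ‖w‖ * (2 * N) + ‖w‖ * (2 * N) := by
        gcongr
        · exact hw 0
        · exact h1 0
        · exact hw 1
        · exact h1 1
    _ = 4 * N * ‖w‖ := by ring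

lemma laplace (v : 𝓢(Ed 2, Ed 2)) (hdiv : ∂_{e 0} (comp v 0) + ∂_{e 1} (comp v 1) = 0)
    (i j : Fin 2) : ∃ (c : ℝ) (b : Fin 2), |c| ≤ 1 ∧ ∀ x,
      (∂_{e 0} (∂_{e 0} (∂_{e j} (comp v i)))) x + (∂_{e 1} (∂_{e 1} (∂_{e j} (comp v i)))) x
        = c * (∂_{e j} (∂_{e b} (vort v))) x := by
  have hc : ∀ k, ∂_{e k} (∂_{e k} (∂_{e j} (comp v i))) = ∂_{e j} (∂_{e k} (∂_{e k} (comp v i))) := by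
    intro k
    rw [D_comm (comp v i) (e k) (e j), D_comm _ (e k) (e j)]
  have h0 : ∂_{e 0} (comp v 0) = - ∂_{e 1} (comp v 1) := eq_neg_of_add_eq_zero_left hdiv
  have h1 : ∂_{e 1} (comp v 1) = - ∂_{e 0} (comp v 0) := eq_neg_of_add_eq_zero_right hdiv
  have hs : ∀ f g : 𝓢(Ed 2, ℝ), ∀ w : Ed 2, ∂_{w} (f - g) = ∂_{w} f - ∂_{w} g := by
    intro f g w
    rw [sub_eq_add_neg, LineDeriv.lineDerivOp_add, LineDeriv.lineDerivOp_neg, ← sub_eq_add_neg]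
  rw [hc, hc]
  fin_cases i
  · refine ⟨-1, 1, by simp, fun x => ?_⟩
    have : ∂_{e 0} (∂_{e 0} (comp v 0)) + ∂_{e 1} (∂_{e 1} (comp v 0)) = - ∂_{e 1} (vort v) := by
      rw [h0, vort, hs, LineDeriv.lineDerivOp_neg, D_comm _ (e 0) (e 1)]
      abel
    have h2 := congrArg (fun f : 𝓢(Ed 2, ℝ) => (∂_{e j} f) x) this
    simp only [LineDeriv.lineDerivOp_neg, LineDeriv.lineDerivOp_add, add_apply,
      neg_apply] at h2
    rw [neg_one_mul]
    exact h2
  · refine ⟨1, 0, by simp, fun x => ?_⟩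
    have : ∂_{e 0} (∂_{e 0} (comp v 1)) + ∂_{e 1} (∂_{e 1} (comp v 1)) = ∂_{e 0} (vort v) := by
      rw [h1, vort, hs, LineDeriv.lineDerivOp_neg, D_comm _ (e 1) (e 0)]
      abel
    have h2 := congrArg (fun f : 𝓢(Ed 2, ℝ) => (∂_{e j} f) x) this
    simp only [LineDeriv.lineDerivOp_add, add_apply] at h2
    rw [one_mul]
    exact h2

lemma main_bound (r : ℝ) (hr0 : 0 < r) (hr1 : r < 1) : ∃ C : ℝ, 0 < C ∧
    ∀ v : 𝓢(Ed 2, Ed 2), ∂_{e 0} (comp v 0) + ∂_{e 1} (comp v 1) = 0 →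
    ∀ H : ℝ, 0 ≤ H → (∀ x y, |vort v x - vort v y| ≤ H * ‖x - y‖ ^ r) →
    ∀ (x : Ed 2) (R : ℝ), 0 < R →
      ‖fderiv ℝ v x‖ ≤ C * (H * R ^ r + (eLpNorm v 2 volume).toReal * (R⁻¹ * R⁻¹)) := by
  obtain ⟨G, Γ, hG, hpos⟩ := exists_kernel
  set I := ∫ y, G y
  set A : Fin 2 → Fin 2 → ℝ := fun a b =>
    ∫ y, (‖y‖ ^ 0 * ‖(∂_{e b} (∂_{e a} Γ)) y‖ + ‖y‖ ^ 1 * ‖(∂_{e b} (∂_{e a} Γ)) y‖) with hA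
  have hA0 : ∀ a b, 0 ≤ A a b := fun a b => integral_nonneg fun y => by positivity
  set K := ∑ a, ∑ b, A a b with hK
  have hAK : ∀ a b, A a b ≤ K := fun a b =>
    (Finset.single_le_sum (fun b _ => hA0 a b) (Finset.mem_univ b)).trans
      (Finset.single_le_sum (f := fun a => ∑ b, A a b)
        (fun a _ => Finset.sum_nonneg fun b _ => hA0 a b) (Finset.mem_univ a))
  have hK0 : 0 ≤ K := (hA0 0 0).trans (hAK 0 0)
  set Q : ℝ := ∑ j, (eLpNorm (∂_{e j} G : 𝓢(Ed 2, ℝ)) 2 volume).toReal with hQ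
  have hQj : ∀ j, (eLpNorm (∂_{e j} G : 𝓢(Ed 2, ℝ)) 2 volume).toReal ≤ Q := fun j =>
    Finset.single_le_sum (f := fun j => (eLpNorm (∂_{e j} G : 𝓢(Ed 2, ℝ)) 2 volume).toReal)
      (fun _ _ => ENNReal.toReal_nonneg) (Finset.mem_univ j)
  have hQ0 : 0 ≤ Q := ENNReal.toReal_nonneg.trans (hQj 0)
  refine ⟨4 * ((K / r + Q + 1) / I), by positivity, ?_⟩
  intro v hdiv H hH hom x R hR
  set V := (eLpNorm v 2 volume).toReal with hV
  have hV0 : 0 ≤ V := ENNReal.toReal_nonneg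
  rw [mul_assoc]
  refine norm_fderiv_le v x _ fun i j => ?_
  obtain ⟨c, b, hc, hlap⟩ := laplace v hdiv i j
  have h1 := core_diff (∂_{e j} (comp v i)) G Γ (vort v) c hc (e j) (e b) hG hlap r H hr0 hr1 hH
    hom K (hAK j b) x R hR
  have h2 : |∫ y, (∂_{e j} (comp v i)) (x + R • y) * G y| ≤ Q * (V * (R⁻¹ * R⁻¹)) := by
    have h3 := ibp (comp v i) G x R (e j)
    have h4 : ∫ y, (∂_{e j} (comp v i)) (x + R • y) * G y
        = - (R⁻¹ * ∫ y, comp v i (x + R • y) * (∂_{e j} G) y) := by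
      rw [h3]; field_simp
    rw [h4, abs_neg, abs_mul, abs_of_pos (inv_pos.2 hR)]
    have h5 : |∫ y, comp v i (x + R • y) * (∂_{e j} G) y|
        ≤ ∫ y, ‖v (x + R • y)‖ * ‖(∂_{e j} G) y‖ := by
      rw [← Real.norm_eq_abs]
      refine norm_integral_le_of_norm_le ?_ (Filter.Eventually.of_forall fun y => ?_)
      · refine ((∂_{e j} G : 𝓢(Ed 2, ℝ)).integrable.norm).bdd_mul
          (c := SchwartzMap.seminorm ℝ 0 0 v) ?_ (Filter.Eventually.of_forall fun y => ?_)
        · exact (v.continuous.comp (by fun_prop)).norm.aestronglyMeasurable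
        · rw [norm_norm]; exact v.norm_le_seminorm ℝ _
      · rw [norm_mul]
        gcongr
        exact PiLp.norm_apply_le (v (x + R • y)) i
    have h6 := l2_bound v (∂_{e j} G) x R hR
    calc R⁻¹ * |∫ y, comp v i (x + R • y) * (∂_{e j} G) y|
        ≤ R⁻¹ * (R⁻¹ * V * Q) := by
          gcongr
          refine (h5.trans h6).trans ?_
          gcongr
          exact hQj j
      _ = _ := by ring
  rw [abs_mul, abs_of_pos hpos] at h1
  rw [div_mul_eq_mul_div, le_div_iff₀ hpos]
  have hX : 0 ≤ H * R ^ r := by positivity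
  have hY : 0 ≤ V * (R⁻¹ * R⁻¹) := by positivity
  have hKr : 0 ≤ K / r := by positivity
  nlinarith [mul_nonneg hKr hY, mul_nonneg hQ0 hX]

lemma optimize (r C N V H : ℝ) (hr0 : 0 < r) (hC : 0 < C) (hV : 0 ≤ V) (hH : 0 ≤ H)
    (h : ∀ R : ℝ, 0 < R → N ≤ C * (H * R ^ r + V * (R⁻¹ * R⁻¹))) :
    N ≤ 2 * C * V ^ (r / (r + 2)) * H ^ (2 / (r + 2)) := by
  have key : ∀ ε : ℝ, 0 < ε → N ≤ 2 * C * (V + ε) ^ (r / (r + 2)) * (H + ε) ^ (2 / (r + 2)) := by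
    intro ε hε
    have hV' : 0 < V + ε := by linarith
    have hH' : 0 < H + ε := by linarith
    set V' := V + ε
    set H' := H + ε
    have hR : 0 < (V' / H') ^ (1 / (r + 2)) := by positivity
    have h1 := h _ hR
    have e1 : H' * ((V' / H') ^ (1 / (r + 2))) ^ r = V' ^ (r / (r + 2)) * H' ^ (2 / (r + 2)) := by
      rw [← Real.rpow_mul (by positivity), Real.div_rpow hV'.le hH'.le, one_div_mul_eq_div]
      have : H' ^ (2 / (r + 2)) = H' / H' ^ (r / (r + 2)) := by
        rw [_root_.eq_div_iff (by positivity), ← Real.rpow_add hH', ← add_div, add_comm 2 r,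
          div_self (by positivity), Real.rpow_one]
      rw [this]; ring
    have e2 : V' * (((V' / H') ^ (1 / (r + 2)))⁻¹ * ((V' / H') ^ (1 / (r + 2)))⁻¹)
        = V' ^ (r / (r + 2)) * H' ^ (2 / (r + 2)) := by
      rw [← mul_inv, ← Real.rpow_add (by positivity), ← add_div, one_add_one_eq_two,
        Real.div_rpow hV'.le hH'.le]
      have : V' ^ (r / (r + 2)) = V' / V' ^ (2 / (r + 2)) := by
        rw [_root_.eq_div_iff (by positivity), ← Real.rpow_add hV', ← add_div,
          div_self (by positivity), Real.rpow_one]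
      rw [this, inv_div]; ring
    calc N ≤ C * (H * ((V' / H') ^ (1 / (r + 2))) ^ r
          + V * (((V' / H') ^ (1 / (r + 2)))⁻¹ * ((V' / H') ^ (1 / (r + 2)))⁻¹)) := h1
      _ ≤ C * (H' * ((V' / H') ^ (1 / (r + 2))) ^ r
          + V' * (((V' / H') ^ (1 / (r + 2)))⁻¹ * ((V' / H') ^ (1 / (r + 2)))⁻¹)) := by
          gcongr <;> simp [V', H', hε.le]
      _ = _ := by rw [e1, e2]; ring
  have hcont : Continuous fun ε : ℝ =>
      2 * C * (V + ε) ^ (r / (r + 2)) * (H + ε) ^ (2 / (r + 2)) := by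
    refine (continuous_const.mul ?_).mul ?_
    · exact (Real.continuous_rpow_const (by positivity)).comp (by fun_prop)
    · exact (Real.continuous_rpow_const (by positivity)).comp (by fun_prop)
  have ht := (hcont.tendsto 0).mono_left (nhdsWithin_le_nhds (s := Set.Ioi 0))
  simp only [add_zero] at ht
  exact ge_of_tendsto ht (by filter_upwards [self_mem_nhdsWithin] with ε hε using key ε hε)

lemma holder_real (om : Ed 2 → ℝ) (r : ℝ) (hr0 : 0 < r) (hfin : holderSemi 2 r om ≠ ⊤)
    (x y : Ed 2) : |om x - om y| ≤ (holderSemi 2 r om).toReal * ‖x - y‖ ^ r := by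
  rcases eq_or_ne x y with rfl | hxy
  · simp [Real.zero_rpow hr0.ne']
  have hpos : 0 < ‖x - y‖ := norm_pos_iff.2 (sub_ne_zero.2 hxy)
  have h1 : (‖om x - om y‖₊ : ℝ≥0∞) / (‖x - y‖₊ : ℝ≥0∞) ^ r ≤ holderSemi 2 r om :=
    le_iSup₂ (f := fun x y => (‖om x - om y‖₊ : ℝ≥0∞) / (‖x - y‖₊ : ℝ≥0∞) ^ r) x y
  have h2 := ENNReal.toReal_mono hfin h1
  rw [ENNReal.toReal_div, ← ENNReal.toReal_rpow] at h2
  simp only [ENNReal.coe_toReal, coe_nnnorm, Real.norm_eq_abs] at h2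
  rwa [div_le_iff₀ (by positivity)] at h2

lemma vort_le (v : 𝓢(Ed 2, Ed 2)) (x : Ed 2) : ‖vort v x‖ ≤ 2 * ‖fderiv ℝ (⇑v) x‖ := by
  have hij : ∀ i j, ‖(∂_{e j} (comp v i)) x‖ ≤ ‖fderiv ℝ (⇑v) x‖ := by
    intro i j
    rw [← fderiv_comp]
    refine (PiLp.norm_apply_le _ i).trans ((ContinuousLinearMap.le_opNorm _ _).trans ?_)
    simp [e]
  have h : vort v x = (∂_{e 0} (comp v 1)) x - (∂_{e 1} (comp v 0)) x := rfl
  rw [h]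
  have h2 := norm_sub_le ((∂_{e 0} (comp v 1)) x) ((∂_{e 1} (comp v 0)) x)
  linarith [hij 1 0, hij 0 1]

lemma eq_zero_of_eLpNorm (v : 𝓢(Ed 2, Ed 2)) (h : eLpNorm (⇑v) 2 volume = 0) (x : Ed 2) :
    ‖fderiv ℝ (⇑v) x‖ = 0 := by
  have h1 := (eLpNorm_eq_zero_iff v.continuous.aestronglyMeasurable (by norm_num)).1 h
  have hz : (⇑v : Ed 2 → Ed 2) = 0 :=
    (Continuous.ae_eq_iff_eq volume v.continuous continuous_zero).1 h1
  rw [hz]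
  simp

lemma to_ennreal (V H : ℝ≥0∞) (r C : ℝ) (hr0 : 0 < r) (hC : 0 < C) (hVfin : V ≠ ⊤)
    (N D : ℝ) (hN : N ≤ 2 * D) (hz : V = 0 → D = 0)
    (hD : H ≠ ⊤ → D ≤ 2 * C * V.toReal ^ (r / (r + 2)) * H.toReal ^ (2 / (r + 2))) :
    ENNReal.ofReal N ≤ ENNReal.ofReal (4 * C) * V ^ (r / (r + 2)) * H ^ (2 / (r + 2)) := by
  have hα : 0 < r / (r + 2) := by positivity
  have hβ : 0 < 2 / (r + 2) := by positivity
  by_cases hHfin : H = ⊤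
  · by_cases hV0 : V = 0
    · have hN' : N ≤ 0 := by rw [hz hV0] at hN; simpa using hN
      rw [ENNReal.ofReal_of_nonpos hN']
      exact zero_le
    · rw [hHfin, ENNReal.top_rpow_of_pos hβ, ENNReal.mul_top]
      · exact le_top
      · refine mul_ne_zero (by simpa using hC) ?_
        rw [Ne, ENNReal.rpow_eq_zero_iff]
        simp [hV0, hVfin]
  · have h1 := hD hHfin
    have h2 : N ≤ 4 * C * V.toReal ^ (r / (r + 2)) * H.toReal ^ (2 / (r + 2)) := by linarith
    refine (ENNReal.ofReal_le_ofReal h2).trans_eq ?_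
    rw [ENNReal.ofReal_mul (by positivity), ENNReal.ofReal_mul (by positivity),
      ← ENNReal.ofReal_rpow_of_nonneg ENNReal.toReal_nonneg hα.le,
      ← ENNReal.ofReal_rpow_of_nonneg ENNReal.toReal_nonneg hβ.le,
      ENNReal.ofReal_toReal hVfin, ENNReal.ofReal_toReal hHfin]

lemma final (r : ℝ) (hr0 : 0 < r) (C : ℝ) (hC : 0 < C) (v : 𝓢(Ed 2, Ed 2))
    (hmain : ∀ H : ℝ, 0 ≤ H → (∀ x y, |vort v x - vort v y| ≤ H * ‖x - y‖ ^ r) →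
      ∀ (x : Ed 2) (R : ℝ), 0 < R →
      ‖fderiv ℝ v x‖ ≤ C * (H * R ^ r + (eLpNorm v 2 volume).toReal * (R⁻¹ * R⁻¹))) :
    (⨆ x, (‖fderiv ℝ (⇑v) x‖₊ : ℝ≥0∞)) ≤ ENNReal.ofReal (4 * C) *
        eLpNorm (⇑v) 2 volume ^ (r / (r + 2)) * holderSemi 2 r (⇑(vort v)) ^ (2 / (r + 2)) ∧
    (⨆ x, (‖vort v x‖₊ : ℝ≥0∞)) ≤ ENNReal.ofReal (4 * C) *
        eLpNorm (⇑v) 2 volume ^ (r / (r + 2)) * holderSemi 2 r (⇑(vort v)) ^ (2 / (r + 2)) := by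
  have hmem : MemLp (⇑v) 2 volume := v.memLp 2
  have hVfin : eLpNorm (⇑v) 2 volume ≠ ⊤ := hmem.eLpNorm_ne_top
  have hgrad : ∀ x, holderSemi 2 r (⇑(vort v)) ≠ ⊤ → ‖fderiv ℝ (⇑v) x‖
      ≤ 2 * C * (eLpNorm (⇑v) 2 volume).toReal ^ (r / (r + 2))
        * (holderSemi 2 r (⇑(vort v))).toReal ^ (2 / (r + 2)) := by
    intro x hHfin
    refine optimize r C _ _ _ hr0 hC ENNReal.toReal_nonneg ENNReal.toReal_nonneg ?_
    exact hmain _ ENNReal.toReal_nonneg (holder_real _ r hr0 hHfin) x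
  have hall : ∀ (N : ℝ) (x : Ed 2), N ≤ 2 * ‖fderiv ℝ (⇑v) x‖ →
      ENNReal.ofReal N ≤ ENNReal.ofReal (4 * C) *
        eLpNorm (⇑v) 2 volume ^ (r / (r + 2)) * holderSemi 2 r (⇑(vort v)) ^ (2 / (r + 2)) :=
    fun N x hN => to_ennreal _ _ r C hr0 hC hVfin N _ hN (fun h => eq_zero_of_eLpNorm v h x)
      (hgrad x)
  constructor
  · refine iSup_le fun x => ?_
    have := hall ‖fderiv ℝ (⇑v) x‖ x (by linarith [norm_nonneg (fderiv ℝ (⇑v) x)])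
    rwa [ofReal_norm] at this
  · refine iSup_le fun x => ?_
    have := hall ‖vort v x‖ x (vort_le v x)
    rwa [ofReal_norm] at this

end

end Vort

/-- For a divergence-free Schwartz vector field `v` on `ℝ²` with vorticity
`ω = ∂₁v² − ∂₂v¹` and `0 < r < 1`:
`‖∇v‖_∞ ≤ C ‖v‖₂^{r/(r+2)} {ω}_r^{2/(r+2)}` and
`‖ω‖_∞ ≤ C ‖v‖₂^{r/(r+2)} {ω}_r^{2/(r+2)}`. -/
theorem stmt8 (r : ℝ) (hr0 : 0 < r) (hr1 : r < 1) :
    ∃ C : ℝ, 0 < C ∧ ∀ v : SchwartzMap (Ed 2) (Ed 2),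
      (∀ x, pd 2 0 (fun y => v y 0) x + pd 2 1 (fun y => v y 1) x = 0) →
      ((⨆ x, (‖fderiv ℝ (⇑v) x‖₊ : ℝ≥0∞))
          ≤ ENNReal.ofReal C * eLpNorm (⇑v) 2 volume ^ (r / (r + 2)) *
            holderSemi 2 r
              (fun x => pd 2 0 (fun y => v y 1) x - pd 2 1 (fun y => v y 0) x)
                ^ (2 / (r + 2))) ∧
      ((⨆ x, (‖pd 2 0 (fun y => v y 1) x - pd 2 1 (fun y => v y 0) x‖₊ : ℝ≥0∞))
          ≤ ENNReal.ofReal C * eLpNorm (⇑v) 2 volume ^ (r / (r + 2)) *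
            holderSemi 2 r
              (fun x => pd 2 0 (fun y => v y 1) x - pd 2 1 (fun y => v y 0) x)
                ^ (2 / (r + 2))) := by
  obtain ⟨C, hC, hmain⟩ := Vort.main_bound r hr0 hr1
  refine ⟨4 * C, by positivity, fun v hdiv => ?_⟩
  have hdiv' : ∂_{Vort.e 0} (Vort.comp v 0) + ∂_{Vort.e 1} (Vort.comp v 1) = 0 := by
    ext x
    have := hdiv x
    rw [Vort.pd_eq, Vort.pd_eq] at this
    exact this
  have hvort : (fun x => pd 2 0 (fun y => v y 1) x - pd 2 1 (fun y => v y 0) x)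
      = ⇑(Vort.vort v) := by
    ext x
    rw [Vort.pd_eq, Vort.pd_eq]
    rfl
  have hvort' : ∀ x, pd 2 0 (fun y => v y 1) x - pd 2 1 (fun y => v y 0) x = Vort.vort v x :=
    fun x => congrFun hvort x
  have hfin := Vort.final r hr0 C hC v (hmain v hdiv')
  rw [hvort]
  refine ⟨hfin.1, ?_⟩
  have h2 := hfin.2
  simp only [← hvort'] at h2 ⊢
  exact h2
end

section
/- Let 0 < r < 1. There exists a constant C, depending only on r, such that for every Schwartz vector field v = (v¹, v²) : ℝ² → ℝ² with div v = 0 and vorticity ω = ∂₁v² − ∂₂v¹, one has ‖v‖_{L^∞} ≤ C · ‖v‖_{L²}^{(r+1)/(r+2)} · {ω}_r^{1/(r+2)}. -/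
open MeasureTheory ENNReal
open scoped RealInnerProductSpace

open Complex in
/-- Mean of the radial derivative over a circle. -/
lemma aux_circle (f : ℂ → ℂ) (f' : ℂ → ℂ →L[ℝ] ℂ) (hf : ∀ z, HasFDerivAt f (f' z) z)
    (hc : Continuous f') (K s : ℝ) (hs : 0 < s)
    (hK : ∀ z, ‖z‖ = s → ‖(f' z 1 + I * f' z I) - (f' 0 1 + I * f' 0 I)‖ ≤ K) :
    ‖∫ θ in (-Real.pi)..Real.pi, f' (s * exp (θ * I)) (exp (θ * I))‖ ≤ 2 * Real.pi * K := by
  have hfc : Continuous f := continuous_iff_continuousAt.2 fun z => (hf z).continuousAt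
  set g : ℂ → ℂ := fun z => f' z 1 + I * f' z I with hg
  have hgc : Continuous g := by
    have h1 : Continuous fun z => f' z 1 := hc.clm_apply continuous_const
    have h2 : Continuous fun z => f' z I := hc.clm_apply continuous_const
    fun_prop
  have hlin : ∀ z w : ℂ, f' z w = w.re * f' z 1 + w.im * f' z I := by
    intro z w
    have : w = w.re • (1 : ℂ) + w.im • I := by
      simp [Complex.re_add_im]
    conv_lhs => rw [this]
    rw [map_add, map_smul, map_smul]; simp
  have hE : ∀ θ : ℝ, HasDerivAt (fun θ : ℝ => exp (θ * I)) (I * exp (θ * I)) θ := by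
    intro θ
    have h1 : HasDerivAt (fun θ : ℝ => (θ : ℂ) * I) (1 * I) θ :=
      (Complex.ofRealCLM.hasDerivAt (x := θ)).mul_const I
    have := h1.cexp
    convert this using 1; ring
  have hE' : ∀ θ : ℝ, HasDerivAt (fun θ : ℝ => exp (-(θ * I))) (-I * exp (-(θ * I))) θ := by
    intro θ
    have h1 : HasDerivAt (fun θ : ℝ => (θ : ℂ) * I) (1 * I) θ :=
      (Complex.ofRealCLM.hasDerivAt (x := θ)).mul_const I
    have h2 : HasDerivAt (fun θ : ℝ => -((θ : ℂ) * I)) (-(1 * I)) θ := h1.neg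
    have := h2.cexp
    convert this using 1; ring
  have hkey : ∀ z w : ℂ, f' z w = (starRingEnd ℂ) w * g z - I * f' z (I * w) := by
    intro z w
    rw [hlin z w, hlin z (I * w)]
    simp only [hg]
    apply Complex.ext <;> simp <;> ring
  have hs' : (s : ℂ) ≠ 0 := by exact_mod_cast hs.ne'
  set G : ℝ → ℂ := fun θ => I * exp (-(θ * I)) * g 0 - I * (s : ℂ)⁻¹ * f (s * exp (θ * I)) with hG
  set G' : ℝ → ℂ := fun θ => exp (-(θ * I)) * g 0 -
    I * f' (s * exp (θ * I)) (I * exp (θ * I)) with hG'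
  have hGd : ∀ θ, HasDerivAt G (G' θ) θ := by
    intro θ
    have h1 := ((hE' θ).const_mul I).mul_const (g 0)
    have h2 : HasDerivAt (fun θ : ℝ => f (s * exp (θ * I)))
        (f' (s * exp (θ * I)) (s * (I * exp (θ * I)))) θ :=
      (hf _).comp_hasDerivAt θ ((hE θ).const_mul (s : ℂ))
    have h3 := h1.sub (h2.const_mul (I * (s : ℂ)⁻¹))
    refine HasDerivAt.congr_deriv h3 ?_
    have : (s : ℂ) * (I * exp (θ * I)) = s • (I * exp (θ * I)) := by simp
    rw [this, map_smul, hG']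
    simp only [real_smul]
    field_simp
    linear_combination (-(exp (-(I * (θ : ℂ))) * g 0)) * I_sq
  have hG'c : Continuous G' := by
    have h2 : Continuous fun θ : ℝ => f' (s * exp (θ * I)) (I * exp (θ * I)) :=
      (hc.comp (by fun_prop)).clm_apply (by fun_prop)
    simp only [hG']; fun_prop
  have hint : ∫ θ in (-Real.pi)..Real.pi, G' θ = 0 := by
    rw [intervalIntegral.integral_eq_sub_of_hasDerivAt (fun x _ => hGd x)
      (hG'c.intervalIntegrable _ _)]
    simp only [hG]
    push_cast
    simp [Complex.exp_neg, Complex.exp_pi_mul_I]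
  have hconj : ∀ θ : ℝ, (starRingEnd ℂ) (exp (θ * I)) = exp (-(θ * I)) := by
    intro θ; rw [← Complex.exp_conj]; simp
  have hdec : ∀ θ : ℝ, f' (s * exp (θ * I)) (exp (θ * I)) =
      exp (-(θ * I)) * (g (s * exp (θ * I)) - g 0) + G' θ := by
    intro θ
    rw [hkey, hconj]; simp only [hG']; ring
  simp_rw [hdec]
  rw [intervalIntegral.integral_add _ (hG'c.intervalIntegrable _ _), hint, add_zero]
  · have := intervalIntegral.norm_integral_le_of_norm_le_const (a := -Real.pi) (b := Real.pi)
      (C := K) (f := fun θ : ℝ => exp (-(θ * I)) * (g (s * exp (θ * I)) - g 0)) ?_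
    · refine this.trans (le_of_eq ?_)
      rw [abs_of_pos (by linarith [Real.pi_pos])]; ring
    · intro θ _
      rw [norm_mul]
      have : ‖exp (-(θ * I))‖ = 1 := by rw [← hconj, RCLike.norm_conj, norm_exp_ofReal_mul_I]
      rw [this, one_mul]
      apply hK
      rw [norm_mul, norm_exp_ofReal_mul_I]; simp [hs.le]
  · apply Continuous.intervalIntegrable
    fun_prop

open Complex in
lemma aux_mean (f : ℂ → ℂ) (f' : ℂ → ℂ →L[ℝ] ℂ) (hf : ∀ z, HasFDerivAt f (f' z) z)
    (hc : Continuous f') (K ρ R : ℝ) (hρ : 0 ≤ ρ) (hR : ρ ≤ R) (hK0 : 0 ≤ K)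
    (hK : ∀ z, ‖z‖ ≤ R → ‖(f' z 1 + I * f' z I) - (f' 0 1 + I * f' 0 I)‖ ≤ K) :
    ‖∫ θ in (-Real.pi)..Real.pi, (f (ρ * exp (θ * I)) - f 0)‖ ≤ 2 * Real.pi * K * R := by
  have hcont : Continuous (fun p : ℝ × ℝ => f' (p.1 * exp (p.2 * I)) (exp (p.2 * I))) :=
    (hc.comp (by fun_prop)).clm_apply (by fun_prop)
  have h1 : ∀ θ : ℝ, f (ρ * exp (θ * I)) - f 0 =
      ∫ s in (0 : ℝ)..ρ, f' (s * exp (θ * I)) (exp (θ * I)) := by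
    intro θ
    have hd : ∀ s : ℝ, HasDerivAt (fun s : ℝ => f (s * exp (θ * I)))
        (f' (s * exp (θ * I)) (exp (θ * I))) s := by
      intro s
      have h : HasDerivAt (fun s : ℝ => (s : ℂ) * exp (θ * I)) (1 * exp (θ * I)) s :=
        (Complex.ofRealCLM.hasDerivAt (x := s)).mul_const _
      rw [one_mul] at h
      exact (hf _).comp_hasDerivAt s h
    rw [intervalIntegral.integral_eq_sub_of_hasDerivAt (fun x _ => hd x)]
    · simp
    · exact Continuous.intervalIntegrable
        (hcont.comp (Continuous.prodMk continuous_id continuous_const)) _ _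
  simp_rw [h1]
  have hpi : -Real.pi ≤ Real.pi := by linarith [Real.pi_pos]
  have hswap : ∫ θ in (-Real.pi)..Real.pi, ∫ s in (0 : ℝ)..ρ,
      f' (s * exp (θ * I)) (exp (θ * I)) =
      ∫ s in (0 : ℝ)..ρ, ∫ θ in (-Real.pi)..Real.pi, f' (s * exp (θ * I)) (exp (θ * I)) := by
    simp_rw [intervalIntegral.integral_of_le hpi]
    rw [intervalIntegral_integral_swap]
    rw [Set.uIoc_of_le hρ, Measure.prod_restrict]
    have : IntegrableOn (fun p : ℝ × ℝ => f' (p.1 * exp (p.2 * I)) (exp (p.2 * I)))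
        (Set.Icc 0 ρ ×ˢ Set.Icc (-Real.pi) Real.pi) (volume.prod volume) :=
      hcont.continuousOn.integrableOn_compact (isCompact_Icc.prod isCompact_Icc)
    exact this.mono_set (Set.prod_mono Set.Ioc_subset_Icc_self Set.Ioc_subset_Icc_self)
  rw [hswap]
  have := intervalIntegral.norm_integral_le_of_norm_le_const (a := 0) (b := ρ)
      (C := 2 * Real.pi * K)
      (f := fun s : ℝ => ∫ θ in (-Real.pi)..Real.pi, f' (s * exp (θ * I)) (exp (θ * I))) ?_
  · refine this.trans ?_
    rw [sub_zero, abs_of_nonneg hρ]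
    gcongr
  · intro s hs
    rw [Set.uIoc_of_le hρ] at hs
    exact aux_circle f f' hf hc K s hs.1 fun z hz => hK z (hz.le.trans (hs.2.trans hR))

open Complex in
/-- Pointwise in radius estimate. -/
lemma aux_radius (f : ℂ → ℂ) (f' : ℂ → ℂ →L[ℝ] ℂ) (hf : ∀ z, HasFDerivAt f (f' z) z)
    (hc : Continuous f') (K ρ R : ℝ) (hρ : 0 ≤ ρ) (hR : ρ ≤ R) (hK0 : 0 ≤ K)
    (hK : ∀ z, ‖z‖ ≤ R → ‖(f' z 1 + I * f' z I) - (f' 0 1 + I * f' 0 I)‖ ≤ K) :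
    2 * Real.pi * ‖f 0‖ ^ 2 ≤ (∫ θ in (-Real.pi)..Real.pi, ‖f (ρ * exp (θ * I))‖ ^ 2)
      + 4 * Real.pi * ‖f 0‖ * (K * R) := by
  have hfc : Continuous f := continuous_iff_continuousAt.2 fun z => (hf z).continuousAt
  have hpi : -Real.pi ≤ Real.pi := by linarith [Real.pi_pos]
  have h := aux_mean f f' hf hc K ρ R hρ hR hK0 hK
  have hi : Continuous fun θ : ℝ => f (ρ * exp (θ * I)) := by fun_prop
  rw [intervalIntegral.integral_sub (hi.intervalIntegrable _ _) (by simp)] at h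
  rw [intervalIntegral.integral_const] at h
  have h2 : ‖∫ θ in (-Real.pi)..Real.pi, f (ρ * exp (θ * I))‖ ≤
      ∫ θ in (-Real.pi)..Real.pi, ‖f (ρ * exp (θ * I))‖ :=
    intervalIntegral.norm_integral_le_integral_norm hpi
  have h3 : 2 * Real.pi * ‖f 0‖ ≤ (∫ θ in (-Real.pi)..Real.pi, ‖f (ρ * exp (θ * I))‖)
      + 2 * Real.pi * K * R := by
    have : ‖(Real.pi - -Real.pi) • f 0‖ = 2 * Real.pi * ‖f 0‖ := by
      rw [norm_smul, Real.norm_of_nonneg (by linarith)]; ring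
    rw [← this]
    have := norm_sub_norm_le ((Real.pi - -Real.pi) • f 0)
      (∫ θ in (-Real.pi)..Real.pi, f (ρ * exp (θ * I)))
    rw [norm_sub_rev] at this
    linarith
  have h4 : ∫ θ in (-Real.pi)..Real.pi, 2 * ‖f 0‖ * ‖f (ρ * exp (θ * I))‖ ≤
      ∫ θ in (-Real.pi)..Real.pi, (‖f 0‖ ^ 2 + ‖f (ρ * exp (θ * I))‖ ^ 2) := by
    apply intervalIntegral.integral_mono_on hpi
    · exact Continuous.intervalIntegrable (by fun_prop) _ _
    · exact Continuous.intervalIntegrable (by fun_prop) _ _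
    · intro θ _
      nlinarith [sq_nonneg (‖f 0‖ - ‖f (ρ * exp (θ * I))‖)]
  rw [intervalIntegral.integral_const_mul, intervalIntegral.integral_add (by simp)
    (Continuous.intervalIntegrable (by fun_prop) _ _), intervalIntegral.integral_const,
    smul_eq_mul] at h4
  nlinarith [mul_le_mul_of_nonneg_left h3 (norm_nonneg (f 0))]

open Complex in
lemma aux_polar (f : ℂ → ℂ) (hfc : Continuous f) (R L : ℝ) (hR : 0 ≤ R) (hL : 0 ≤ L)
    (hfL : ∫⁻ z, ‖f z‖ₑ ^ 2 ≤ ENNReal.ofReal (L ^ 2)) :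
    ∫ ρ in (0 : ℝ)..R, ρ * ∫ θ in (-Real.pi)..Real.pi, ‖f (ρ * exp (θ * I))‖ ^ 2 ≤ L ^ 2 := by
  have hpi : -Real.pi ≤ Real.pi := by linarith [Real.pi_pos]
  set F : ℝ × ℝ → ℝ := fun p => p.1 * ‖f (p.1 * exp (p.2 * I))‖ ^ 2 with hF
  have hFc : Continuous F := by fun_prop
  have hint : IntegrableOn F (Set.Ioc 0 R ×ˢ Set.Ioo (-Real.pi) Real.pi) (volume.prod volume) := by
    have : IntegrableOn F
        (Set.Icc 0 R ×ˢ Set.Icc (-Real.pi) Real.pi) (volume.prod volume) :=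
      hFc.continuousOn.integrableOn_compact (isCompact_Icc.prod isCompact_Icc)
    exact this.mono_set (Set.prod_mono Set.Ioc_subset_Icc_self Set.Ioo_subset_Icc_self)
  have h1 : ∫ ρ in (0 : ℝ)..R, ρ * ∫ θ in (-Real.pi)..Real.pi, ‖f (ρ * exp (θ * I))‖ ^ 2 =
      ∫ p in Set.Ioc 0 R ×ˢ Set.Ioo (-Real.pi) Real.pi, F p ∂(volume.prod volume) := by
    rw [setIntegral_prod _ hint, intervalIntegral.integral_of_le hR]
    simp_rw [intervalIntegral.integral_of_le hpi, ← integral_Ioc_eq_integral_Ioo,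
      hF, integral_const_mul]
  rw [h1]
  have hmeas : MeasurableSet (Set.Ioc 0 R ×ˢ Set.Ioo (-Real.pi) Real.pi) :=
    measurableSet_Ioc.prod measurableSet_Ioo
  have hnn : 0 ≤ᵐ[(volume.prod volume).restrict (Set.Ioc 0 R ×ˢ Set.Ioo (-Real.pi) Real.pi)] F := by
    filter_upwards [ae_restrict_mem hmeas] with p hp
    exact mul_nonneg hp.1.1.le (by positivity)
  rw [← ENNReal.ofReal_le_ofReal_iff (by positivity),
    ofReal_integral_eq_lintegral_ofReal hint hnn]
  refine le_trans ?_ hfL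
  rw [← Complex.lintegral_comp_polarCoord_symm]
  have hsub : Set.Ioc 0 R ×ˢ Set.Ioo (-Real.pi) Real.pi ⊆ polarCoord.target := by
    rw [polarCoord_target]
    exact Set.prod_mono Set.Ioc_subset_Ioi_self le_rfl
  refine le_trans (lintegral_mono_set hsub) ?_
  rw [← Measure.volume_eq_prod]
  apply lintegral_mono_ae
  filter_upwards [ae_restrict_mem polarCoord.open_target.measurableSet] with p hp
  rw [polarCoord_target] at hp
  rw [hF, ENNReal.ofReal_mul (le_of_lt hp.1), smul_eq_mul, Complex.polarCoord_symm_apply,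
    Complex.exp_mul_I]
  simp only [ofReal_cos, ofReal_sin]
  rw [ENNReal.ofReal_pow (norm_nonneg _), ofReal_norm]

open Complex in
lemma aux_main (f : ℂ → ℂ) (f' : ℂ → ℂ →L[ℝ] ℂ) (hf : ∀ z, HasFDerivAt f (f' z) z)
    (hc : Continuous f') (K R L : ℝ) (hR : 0 ≤ R) (hK0 : 0 ≤ K) (hL : 0 ≤ L)
    (hfL : ∫⁻ z, ‖f z‖ₑ ^ 2 ≤ ENNReal.ofReal (L ^ 2))
    (hK : ∀ z, ‖z‖ ≤ R → ‖(f' z 1 + I * f' z I) - (f' 0 1 + I * f' 0 I)‖ ≤ K) :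
    Real.pi * ‖f 0‖ ^ 2 * R ^ 2 ≤ L ^ 2 + 2 * Real.pi * ‖f 0‖ * K * R ^ 3 := by
  have hfc : Continuous f := continuous_iff_continuousAt.2 fun z => (hf z).continuousAt
  have h1 := aux_polar f hfc R L hR hL hfL
  set A : ℝ → ℝ := fun ρ => ∫ θ in (-Real.pi)..Real.pi, ‖f (ρ * exp (θ * I))‖ ^ 2 with hA
  have hAc : Continuous A := by
    apply intervalIntegral.continuous_parametric_intervalIntegral_of_continuous'
    simp only [Function.uncurry_def]
    fun_prop
  have h2 : ∫ ρ in (0 : ℝ)..R, (2 * Real.pi * ‖f 0‖ ^ 2 - 4 * Real.pi * ‖f 0‖ * (K * R)) * ρ ≤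
      ∫ ρ in (0 : ℝ)..R, ρ * A ρ := by
    apply intervalIntegral.integral_mono_on hR
    · exact Continuous.intervalIntegrable (by fun_prop) _ _
    · exact Continuous.intervalIntegrable (by fun_prop) _ _
    · intro ρ hρ
      have := aux_radius f f' hf hc K ρ R hρ.1 hρ.2 hK0 hK
      rw [mul_comm ρ]
      exact mul_le_mul_of_nonneg_right (by simp only [hA]; linarith) hρ.1
  rw [intervalIntegral.integral_const_mul, integral_id] at h2
  have h3 := h2.trans h1
  nlinarith [h3]

open Complex in
lemma aux_final (f : ℂ → ℂ) (f' : ℂ → ℂ →L[ℝ] ℂ) (hf : ∀ z, HasFDerivAt f (f' z) z)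
    (hc : Continuous f') (r H L : ℝ) (hr : 0 < r) (hH0 : 0 < H) (hL : 0 ≤ L)
    (hfL : ∫⁻ z, ‖f z‖ₑ ^ 2 ≤ ENNReal.ofReal (L ^ 2))
    (hH : ∀ z, ‖(f' z 1 + I * f' z I) - (f' 0 1 + I * f' 0 I)‖ ≤ H * ‖z‖ ^ r) :
    ‖f 0‖ ≤ 4 * L ^ ((r + 1) / (r + 2)) * H ^ (1 / (r + 2)) := by
  rcases (norm_nonneg (f 0)).eq_or_lt with h0 | h0
  · rw [← h0]; positivity
  set a := ‖f 0‖ with ha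
  have hq : 0 < a / (4 * H) := by positivity
  set R : ℝ := (a / (4 * H)) ^ (1 / (r + 1)) with hRdef
  have hR : 0 < R := Real.rpow_pos_of_pos hq _
  have hRr : R ^ (r + 1) = a / (4 * H) := by
    rw [hRdef, ← Real.rpow_mul hq.le, one_div, inv_mul_cancel₀ (by linarith), Real.rpow_one]
  have hm := aux_main f f' hf hc (H * R ^ r) R L hR.le (by positivity) hL hfL (by
    intro z hz
    refine (hH z).trans ?_
    gcongr)
  have hRR : R ^ r * R = a / (4 * H) := by rw [← hRr, Real.rpow_add_one hR.ne']
  have e : 2 * Real.pi * a * (H * R ^ r) * R ^ 3 = Real.pi * a ^ 2 * R ^ 2 / 2 := by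
    have : 2 * Real.pi * a * (H * R ^ r) * R ^ 3 = 2 * Real.pi * a * H * (R ^ r * R) * R ^ 2 := by
      ring
    rw [this, hRR]; field_simp; ring
  rw [← ha, e] at hm
  have hm2 : (a * R) ^ 2 ≤ L ^ 2 := by
    have := Real.pi_gt_three
    nlinarith [sq_nonneg (a * R)]
  have hm3 : a * R ≤ L := (sq_le_sq₀ (by positivity) hL).1 hm2
  have hm4 : (a * R) ^ (r + 1) ≤ L ^ (r + 1) := by gcongr
  rw [Real.mul_rpow h0.le hR.le, hRr] at hm4
  have hm5 : a ^ (r + 2) ≤ 4 * H * L ^ (r + 1) := by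
    have : a ^ (r + 2) = a ^ (r + 1) * a := by
      rw [← Real.rpow_add_one h0.ne']; ring_nf
    rw [this]
    have : a ^ (r + 1) * a = 4 * H * (a ^ (r + 1) * (a / (4 * H))) := by field_simp
    rw [this]; gcongr
  have hr2 : 0 < r + 2 := by linarith
  have hm6 : a ≤ (4 * H * L ^ (r + 1)) ^ (1 / (r + 2)) := by
    have := Real.rpow_le_rpow (by positivity) hm5 (z := 1 / (r + 2)) (by positivity)
    rwa [← Real.rpow_mul h0.le, mul_one_div_cancel hr2.ne', Real.rpow_one] at this
  refine hm6.trans ?_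
  rw [Real.mul_rpow (by positivity) (by positivity), Real.mul_rpow (by positivity) (by positivity),
    ← Real.rpow_mul hL]
  have h4 : (4 : ℝ) ^ (1 / (r + 2)) ≤ 4 := by
    conv_rhs => rw [← Real.rpow_one 4]
    apply Real.rpow_le_rpow_of_exponent_le (by norm_num)
    rw [div_le_one hr2]; linarith
  have : (r + 1) * (1 / (r + 2)) = (r + 1) / (r + 2) := by ring
  rw [this]
  have : 0 ≤ H ^ (1 / (r + 2)) * L ^ ((r + 1) / (r + 2)) := by positivity
  nlinarith

lemma pd_eq (v : SchwartzMap (Ed 2) (Ed 2)) (i j : Fin 2) (x : Ed 2) :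
    pd 2 i (fun y => v y j) x = (fderiv ℝ v x (EuclideanSpace.single i 1)) j := by
  have h := (v.differentiableAt (x := x)).hasFDerivAt
  have h2 := ((EuclideanSpace.proj (𝕜 := ℝ) j : Ed 2 →L[ℝ] ℝ).hasFDerivAt).comp x h
  have h3 : HasFDerivAt (fun y => v y j)
    ((EuclideanSpace.proj (𝕜 := ℝ) j : Ed 2 →L[ℝ] ℝ).comp (fderiv ℝ v x)) x := h2
  rw [pd, h3.fderiv]; rfl

/-- The map `(a, b) ↦ a - i b`. -/
noncomputable def cmap : Ed 2 →L[ℝ] ℂ :=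
  Complex.ofRealCLM.comp (EuclideanSpace.proj (𝕜 := ℝ) 0 : Ed 2 →L[ℝ] ℝ) -
    Complex.I • Complex.ofRealCLM.comp (EuclideanSpace.proj (𝕜 := ℝ) 1 : Ed 2 →L[ℝ] ℝ)

lemma cmap_apply (x : Ed 2) : cmap x = (x 0 : ℂ) - Complex.I * (x 1 : ℂ) := by
  simp [cmap]

lemma norm_cmap (x : Ed 2) : ‖cmap x‖ = ‖x‖ := by
  rw [cmap_apply, EuclideanSpace.norm_eq, Complex.norm_def, Complex.normSq_apply]
  simp [Fin.sum_univ_two, pow_two]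

/-- The pointwise estimate with real constants. -/
lemma aux_real (r : ℝ) (hr0 : 0 < r) (v : SchwartzMap (Ed 2) (Ed 2))
    (hdiv : ∀ x, pd 2 0 (fun y => v y 0) x + pd 2 1 (fun y => v y 1) x = 0)
    (ω : Ed 2 → ℝ)
    (hω : ω = fun x => pd 2 0 (fun y => v y 1) x - pd 2 1 (fun y => v y 0) x)
    (H : ℝ) (hH0 : 0 < H) (hH : ∀ x y, ‖ω x - ω y‖ ≤ H * ‖x - y‖ ^ r) (x₀ : Ed 2) :
    ‖v x₀‖ ≤ 4 * (eLpNorm v 2 volume).toReal ^ ((r + 1) / (r + 2)) * H ^ (1 / (r + 2)) := by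
  set e := Complex.orthonormalBasisOneI.repr with he
  set L := (eLpNorm v 2 volume).toReal with hLdef
  set τ : ℂ → Ed 2 := fun z => x₀ + e z with hτ
  have hτd : ∀ z, HasFDerivAt τ (e.toContinuousLinearEquiv : ℂ →L[ℝ] Ed 2) z := fun z =>
    (e.toContinuousLinearEquiv : ℂ →L[ℝ] Ed 2).hasFDerivAt.const_add x₀
  have hτc : Continuous τ := continuous_iff_continuousAt.2 fun z => (hτd z).continuousAt
  set f : ℂ → ℂ := fun z => cmap (v (τ z)) with hf
  set f' : ℂ → ℂ →L[ℝ] ℂ := fun z =>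
    cmap.comp ((fderiv ℝ v (τ z)).comp (e.toContinuousLinearEquiv : ℂ →L[ℝ] Ed 2)) with hf'
  have hfd : ∀ z, HasFDerivAt f (f' z) z := fun z =>
    cmap.hasFDerivAt.comp z ((v.differentiableAt.hasFDerivAt).comp z (hτd z))
  have hvc : Continuous (fderiv ℝ v) := (v.smooth 1).continuous_fderiv (by norm_num)
  have hf'c : Continuous f' := by
    have : Continuous fun z => fderiv ℝ v (τ z) := hvc.comp hτc
    exact continuous_const.clm_comp (this.clm_comp continuous_const)
  have e1 : e 1 = EuclideanSpace.single 0 1 := by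
    ext i; fin_cases i <;> simp [he]
  have eI : e Complex.I = EuclideanSpace.single 1 1 := by
    ext i; fin_cases i <;> simp [he]
  have hg : ∀ z, f' z 1 + Complex.I * f' z Complex.I = -Complex.I * ω (τ z) := by
    intro z
    have hd := hdiv (τ z)
    simp only [pd_eq] at hd
    simp only [hf', hω, pd_eq, ContinuousLinearMap.comp_apply, cmap_apply]
    simp only [ContinuousLinearEquiv.coe_coe, LinearIsometryEquiv.coe_toContinuousLinearEquiv,
      e1, eI]
    apply Complex.ext
    · simp; linarith
    · simp; ring
  have hLfin : eLpNorm v 2 volume ≠ ⊤ := (v.memLp 2 volume).2.ne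
  have hfL : ∫⁻ z, ‖f z‖ₑ ^ 2 ≤ ENNReal.ofReal (L ^ 2) := by
    have hmp : MeasurePreserving τ volume volume :=
      (measurePreserving_add_left volume x₀).comp
        Complex.orthonormalBasisOneI.measurePreserving_repr
    have h1 : eLpNorm f 2 volume = eLpNorm v 2 volume := by
      rw [← eLpNorm_comp_measurePreserving v.continuous.aestronglyMeasurable hmp]
      apply eLpNorm_congr_norm_ae
      filter_upwards with z
      simp [hf, norm_cmap]
    have h2 : ENNReal.ofReal (L ^ 2) = eLpNorm f 2 volume ^ 2 := by
      rw [ENNReal.ofReal_pow ENNReal.toReal_nonneg, ENNReal.ofReal_toReal hLfin, h1]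
    rw [h2, eLpNorm_eq_lintegral_rpow_enorm_toReal (by norm_num) (by norm_num)]
    rw [← ENNReal.rpow_natCast, ← ENNReal.rpow_mul]
    simp
  have := aux_final f f' hfd hf'c r H L hr0 hH0 ENNReal.toReal_nonneg hfL (by
    intro z
    rw [hg, hg, ← mul_sub, norm_mul, ← Complex.ofReal_sub]
    have := hH (τ z) (τ 0)
    simp only [hτ, map_zero, add_zero, add_sub_cancel_left, LinearIsometryEquiv.norm_map] at this
    rw [Complex.norm_real, norm_neg, Complex.norm_I, one_mul]
    simpa [hτ] using this)
  simpa [hf, hτ, norm_cmap] using this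

/-- For a divergence-free Schwartz vector field `v` on `ℝ²` with vorticity
`ω` and `0 < r < 1`: `‖v‖_∞ ≤ C ‖v‖₂^{(r+1)/(r+2)} {ω}_r^{1/(r+2)}`. -/
theorem stmt9 (r : ℝ) (hr0 : 0 < r) (hr1 : r < 1) :
    ∃ C : ℝ, 0 < C ∧ ∀ v : SchwartzMap (Ed 2) (Ed 2),
      (∀ x, pd 2 0 (fun y => v y 0) x + pd 2 1 (fun y => v y 1) x = 0) →
      (⨆ x, (‖v x‖₊ : ℝ≥0∞))
        ≤ ENNReal.ofReal C * eLpNorm (⇑v) 2 volume ^ ((r + 1) / (r + 2)) *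
          holderSemi 2 r
            (fun x => pd 2 0 (fun y => v y 1) x - pd 2 1 (fun y => v y 0) x)
              ^ (1 / (r + 2)) := by
  refine ⟨4, by norm_num, fun v hdiv => ?_⟩
  set ω : Ed 2 → ℝ := fun x => pd 2 0 (fun y => v y 1) x - pd 2 1 (fun y => v y 0) x with hω
  have hr2 : 0 < r + 2 := by linarith
  have hLfin : eLpNorm v 2 volume ≠ ⊤ := (v.memLp 2 volume).2.ne
  by_cases hL0 : eLpNorm v 2 volume = 0
  · rw [eLpNorm_eq_zero_iff v.continuous.aestronglyMeasurable (by norm_num)] at hL0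
    have hv : (v : Ed 2 → Ed 2) = 0 :=
      (v.continuous.ae_eq_iff_eq volume continuous_const).1 hL0
    simp [hv]
  by_cases hHtop : holderSemi 2 r ω = ⊤
  · rw [hHtop, ENNReal.top_rpow_of_pos (by positivity), ENNReal.mul_top]
    · exact le_top
    · refine mul_ne_zero (by simp) ?_
      rw [Ne, ENNReal.rpow_eq_zero_iff]
      simp [hL0, hLfin]
  have hle : ∀ x y, (‖ω x - ω y‖₊ : ℝ≥0∞) / (‖x - y‖₊ : ℝ≥0∞) ^ r ≤ holderSemi 2 r ω :=
    fun x y => le_iSup₂ (f := fun x y => (‖ω x - ω y‖₊ : ℝ≥0∞) / (‖x - y‖₊ : ℝ≥0∞) ^ r) x y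
  set h := (holderSemi 2 r ω).toReal with hh
  have hreal : ∀ x y, ‖ω x - ω y‖ ≤ h * ‖x - y‖ ^ r := by
    intro x y
    rcases eq_or_ne x y with rfl | hxy
    · simp [Real.zero_rpow hr0.ne']
    have hpos : 0 < ‖x - y‖ := norm_pos_iff.2 (sub_ne_zero.2 hxy)
    have := ENNReal.toReal_mono hHtop (hle x y)
    rw [ENNReal.toReal_div, ← ENNReal.toReal_rpow] at this
    simp only [ENNReal.coe_toReal, coe_nnnorm] at this
    rwa [div_le_iff₀ (by positivity)] at this
  have hh0 : 0 ≤ h := ENNReal.toReal_nonneg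
  refine iSup_le fun x => ?_
  have hlim : ‖v x‖ ≤
      4 * (eLpNorm v 2 volume).toReal ^ ((r + 1) / (r + 2)) * h ^ (1 / (r + 2)) := by
    have ht : Filter.Tendsto (fun H : ℝ =>
        4 * (eLpNorm v 2 volume).toReal ^ ((r + 1) / (r + 2)) * H ^ (1 / (r + 2)))
        (nhdsWithin h (Set.Ioi h))
        (nhds (4 * (eLpNorm v 2 volume).toReal ^ ((r + 1) / (r + 2)) * h ^ (1 / (r + 2)))) := by
      apply Filter.Tendsto.mono_left _ nhdsWithin_le_nhds
      apply Filter.Tendsto.const_mul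
      exact (Real.continuousAt_rpow_const h _ (Or.inr (by positivity))).tendsto
    refine ge_of_tendsto ht ?_
    filter_upwards [self_mem_nhdsWithin] with H hH
    have hH' : h < H := hH
    refine aux_real r hr0 v hdiv ω hω H (hh0.trans_lt hH') (fun x y => ?_) x
    exact (hreal x y).trans (by gcongr)
  have h1 := ENNReal.ofReal_le_ofReal hlim
  rw [ENNReal.ofReal_mul (by positivity), ENNReal.ofReal_mul (by positivity),
    ← ENNReal.ofReal_rpow_of_nonneg ENNReal.toReal_nonneg (by positivity),
    ← ENNReal.ofReal_rpow_of_nonneg hh0 (by positivity), ENNReal.ofReal_toReal hLfin,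
    ENNReal.ofReal_toReal hHtop, ofReal_norm] at h1
  exact h1
end

section
/- Let 0 < θ ≤ 1. There exists a constant C, depending only on θ, such that for every Schwartz vector field v = (v¹, v²) : ℝ² → ℝ² with div v = 0 and vorticity ω = ∂₁v² − ∂₂v¹, one has ‖v‖_{L^∞} ≤ C · ‖v‖_{L²}^{θ/(θ+1)} · [ω]_θ^{1/(θ+1)}. -/
open MeasureTheory ENNReal
open scoped RealInnerProductSpace

open scoped FourierTransform SchwartzMap LineDeriv

lemma aux_scale (c : ℝ) (hc : 0 < c) (F : Ed 2 → ℝ≥0∞) (hF : Measurable F) :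
    ∫⁻ x, F (c • x) = ENNReal.ofReal ((c ^ 2)⁻¹) * ∫⁻ x, F x := by
  rw [← lintegral_map hF (measurable_const_smul c), Measure.map_addHaar_smul _ hc.ne',
    lintegral_smul_measure]
  simp

lemma aux_K (s : ℝ) (hs : 2 < s) : ∫⁻ x : Ed 2, (1 + ‖x‖ₑ) ^ (-s) < ⊤ := by
  have h := finite_integral_one_add_norm (E := Ed 2) (μ := volume) (r := s) (by simpa using hs)
  refine lt_of_le_of_lt (lintegral_mono fun x => ?_) h
  rw [← ENNReal.ofReal_rpow_of_pos (by positivity), ENNReal.ofReal_add (by positivity) (by positivity),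
    ofReal_norm]
  simp

lemma aux_hold (s : ℝ) (hs : 2 < s) (g : Ed 2 → ℝ≥0∞) (hg : Measurable g) (c : ℝ) (hc : 0 < c) :
    ∫⁻ x, g x ≤ ((ENNReal.ofReal ((c ^ 2)⁻¹) * ∫⁻ x : Ed 2, (1 + ‖x‖ₑ) ^ (-s)) *
      (2 ^ (s - 1) * ((∫⁻ x, g x ^ 2) +
        ENNReal.ofReal c ^ s * ∫⁻ x, ‖x‖ₑ ^ s * g x ^ 2))) ^ (1 / 2 : ℝ) := by
  have hb : ∀ x : Ed 2, (1 + ‖c • x‖ₑ) ≠ 0 := fun x => by simp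
  have ht : ∀ x : Ed 2, (1 + ‖c • x‖ₑ) ≠ ⊤ := fun x => by simp
  have h := ENNReal.lintegral_mul_le_Lp_mul_Lq (volume : Measure (Ed 2)) Real.HolderConjugate.two_two
    (f := fun x => (1 + ‖c • x‖ₑ) ^ (-(s / 2))) (g := fun x => (1 + ‖c • x‖ₑ) ^ (s / 2) * g x)
    (by fun_prop) (by fun_prop)
  have e1 : ∀ x, (1 + ‖c • x‖ₑ) ^ (-(s / 2)) * ((1 + ‖c • x‖ₑ) ^ (s / 2) * g x) = g x := by
    intro x
    rw [← mul_assoc, ← ENNReal.rpow_add _ _ (hb x) (ht x)]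
    simp
  simp only [Pi.mul_apply, e1] at h
  refine h.trans ?_
  rw [← ENNReal.mul_rpow_of_nonneg _ _ (by norm_num)]
  gcongr
  · rw [← aux_scale c hc _ (by fun_prop)]
    refine lintegral_mono fun x => ?_
    simp only
    rw [← ENNReal.rpow_mul]
    gcongr
    · simp
    · linarith
  · rw [← lintegral_const_mul _ (by fun_prop), ← lintegral_add_left (by fun_prop),
      ← lintegral_const_mul _ (by fun_prop)]
    refine lintegral_mono fun x => ?_
    simp only
    rw [ENNReal.mul_rpow_of_nonneg _ _ (by norm_num), ← ENNReal.rpow_mul]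
    have := ENNReal.rpow_add_le_mul_rpow_add_rpow 1 (‖c • x‖ₑ) (p := s) (by linarith)
    rw [enorm_smul, ENNReal.mul_rpow_of_nonneg _ _ (by linarith), Real.enorm_eq_ofReal hc.le] at this
    rw [enorm_smul, Real.enorm_eq_ofReal hc.le, show s / 2 * 2 = s by ring]
    calc _ ≤ _ := mul_le_mul_left this _
      _ = _ := by 
        rw [show (2:ℝ) = ((2:ℕ):ℝ) by norm_num, ENNReal.rpow_natCast]
        simp; ring

lemma aux_interp (θ : ℝ) (hθ : 0 < θ) : ∃ C : ℝ≥0∞, C ≠ ⊤ ∧ ∀ g : Ed 2 → ℝ≥0∞, Measurable g →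
    ∫⁻ x, g x ≤ (C * ((∫⁻ x, g x ^ 2) ^ (θ / (θ + 1)) *
      (∫⁻ x, ‖x‖ₑ ^ (2 + 2 * θ) * g x ^ 2) ^ (1 / (θ + 1)))) ^ (1 / 2 : ℝ) := by
  set s := 2 + 2 * θ with hs
  have hs2 : 2 < s := by linarith
  refine ⟨(∫⁻ x : Ed 2, (1 + ‖x‖ₑ) ^ (-s)) * 2 ^ (s - 1) * 2 + 1, ?_, fun g hg => ?_⟩
  · have := (aux_K s hs2).ne
    finiteness
  have h := aux_hold s hs2 g hg
  set K := ∫⁻ x : Ed 2, (1 + ‖x‖ₑ) ^ (-s)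
  by_cases h0 : ∀ᵐ x, g x = 0
  · rw [lintegral_congr_ae h0]; simp
  have hA : (∫⁻ x, g x ^ 2) ≠ 0 := by
    intro hA
    rw [lintegral_eq_zero_iff (by fun_prop)] at hA
    apply h0
    filter_upwards [hA] with x hx
    simpa using hx
  have hB : (∫⁻ x, ‖x‖ₑ ^ s * g x ^ 2) ≠ 0 := by
    intro hA
    rw [lintegral_eq_zero_iff (by fun_prop)] at hA
    apply h0
    have : ∀ᵐ x : Ed 2, x ≠ 0 := by
      simp [ae_iff]
    filter_upwards [hA, this] with x hx hx0
    simpa [hx0, (by linarith : ¬ s < 0)] using hx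
  set A := (∫⁻ x, g x ^ 2)
  set B := (∫⁻ x, ‖x‖ₑ ^ s * g x ^ 2)
  by_cases hAt : A = ⊤
  · rw [hAt, ENNReal.top_rpow_of_pos (by positivity), ENNReal.top_mul, ENNReal.mul_top] <;> simp [hB]
    intro _; linarith
  by_cases hBt : B = ⊤
  · rw [hBt, ENNReal.top_rpow_of_pos (by positivity), ENNReal.mul_top, ENNReal.mul_top] <;> simp [hA]
    intro _; positivity
  have ha := ENNReal.toReal_pos hA hAt
  have hb := ENNReal.toReal_pos hB hBt
  rw [← ENNReal.ofReal_toReal hAt, ← ENNReal.ofReal_toReal hBt] at h ⊢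
  set a := A.toReal
  set b := B.toReal
  have hc : 0 < (a / b) ^ (1 / s) := by positivity
  refine (h _ hc).trans (ENNReal.rpow_le_rpow ?_ (by norm_num))
  have e1 : ENNReal.ofReal ((a / b) ^ (1 / s)) ^ s * ENNReal.ofReal b = ENNReal.ofReal a := by
    rw [ENNReal.ofReal_rpow_of_pos hc, ← Real.rpow_mul (by positivity), one_div_mul_cancel (by linarith),
      Real.rpow_one, ← ENNReal.ofReal_mul (by positivity)]
    congr 1; field_simp
  rw [e1]
  have e2 : ENNReal.ofReal ((((a / b) ^ (1 / s)) ^ 2)⁻¹) * ENNReal.ofReal a =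
      ENNReal.ofReal a ^ (θ / (θ + 1)) * ENNReal.ofReal b ^ (1 / (θ + 1)) := by
    rw [ENNReal.ofReal_rpow_of_pos ha, ENNReal.ofReal_rpow_of_pos hb,
      ← ENNReal.ofReal_mul (by positivity), ← ENNReal.ofReal_mul (by positivity)]
    congr 1
    rw [← Real.rpow_natCast, ← Real.rpow_mul (by positivity), ← Real.rpow_neg (by positivity),
      Real.div_rpow ha.le hb.le]
    have x1 : 1 / s * ((2:ℕ):ℝ) = 1 / (θ + 1) := by
      rw [hs]; push_cast; field_simp; ring
    have x2 : θ / (θ + 1) = - (1 / (θ + 1)) + 1 := by field_simp; ring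
    rw [x1, x2, Real.rpow_add ha, Real.rpow_one, Real.rpow_neg hb.le]
    field_simp
  rw [← e2]
  calc _ = (K * 2 ^ (s - 1) * 2) * (ENNReal.ofReal ((((a / b) ^ (1 / s)) ^ 2)⁻¹) * ENNReal.ofReal a) := by ring
    _ ≤ _ := by gcongr; simp

lemma aux_ft_deriv (f : 𝓢(Ed 2, ℂ)) (i : Fin 2) (ξ : Ed 2) :
    𝓕 (∂_{(EuclideanSpace.single i (1:ℝ) : Ed 2)} f) ξ
      = (2 * Real.pi * Complex.I) * ((ξ i : ℂ) * 𝓕 f ξ) := by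
  rw [SchwartzMap.fourier_lineDerivOp_eq]
  have : (inner ℝ · (EuclideanSpace.single i (1:ℝ) : Ed 2)).HasTemperateGrowth :=
    ((innerSL ℝ).flip (EuclideanSpace.single i (1:ℝ) : Ed 2)).hasTemperateGrowth
  rw [_root_.smul_apply, SchwartzMap.smulLeftCLM_apply_apply this]
  simp [EuclideanSpace.inner_single_right]

lemma aux_ft (f : Ed 2 → ℂ) (κ : Ed 2) :
    ftransform 2 f κ = 𝓕 f ((2 * Real.pi)⁻¹ • κ) := by
  rw [Real.fourier_eq', ftransform]
  congr 1
  ext x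
  rw [inner_smul_right, smul_eq_mul]
  congr 2
  have : (Real.pi : ℂ) ≠ 0 := by exact_mod_cast Real.pi_ne_zero
  push_cast
  field_simp

/-- The complexified component of a vector field. -/
noncomputable def auxComp (v : 𝓢(Ed 2, Ed 2)) (j : Fin 2) : 𝓢(Ed 2, ℂ) :=
  SchwartzMap.postcompCLM (𝕜 := ℝ) (Complex.ofRealCLM ∘L (EuclideanSpace.proj j : Ed 2 →L[ℝ] ℝ)) v

lemma auxComp_apply (v : 𝓢(Ed 2, Ed 2)) (j : Fin 2) (x : Ed 2) :
    auxComp v j x = ((v x j : ℝ) : ℂ) := rfl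

lemma auxComp_deriv (v : 𝓢(Ed 2, Ed 2)) (i j : Fin 2) (x : Ed 2) :
    ∂_{(EuclideanSpace.single i (1:ℝ) : Ed 2)} (auxComp v j) x
      = ((pd 2 i (fun y => v y j) x : ℝ) : ℂ) := by
  rw [SchwartzMap.lineDerivOp_apply_eq_fderiv, pd]
  have h1 : HasFDerivAt v (fderiv ℝ v x) x := v.hasFDerivAt x
  have h2 := ((EuclideanSpace.proj j : Ed 2 →L[ℝ] ℝ).hasFDerivAt (x := v x)).comp x h1
  have h3 := (Complex.ofRealCLM.hasFDerivAt (x := v x j)).comp x h2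
  have e2 := h2.fderiv
  have e3 := h3.fderiv
  change fderiv ℝ (fun y => v y j) x = _ at e2
  change fderiv ℝ (auxComp v j) x = _ at e3
  rw [e2, e3]
  rfl

lemma aux_lagrange (p q : ℝ) (a b : ℂ) (h : (p : ℂ) * a + q * b = 0) :
    ‖(p : ℂ) * b - q * a‖ ^ 2 = (p ^ 2 + q ^ 2) * (‖a‖ ^ 2 + ‖b‖ ^ 2) := by
  have h' : ‖(p : ℂ) * a + q * b‖ ^ 2 = 0 := by rw [h]; simp
  simp only [Complex.sq_norm, Complex.normSq_apply, Complex.add_re, Complex.add_im, Complex.sub_re,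
    Complex.sub_im, Complex.mul_re, Complex.mul_im, Complex.ofReal_re, Complex.ofReal_im] at h' ⊢
  linarith

lemma aux_vort (v : 𝓢(Ed 2, Ed 2))
    (hv : ∀ x, pd 2 0 (fun y => v y 0) x + pd 2 1 (fun y => v y 1) x = 0) (j : Fin 2) (ξ : Ed 2) :
    ‖ξ‖ₑ ^ 2 * ‖𝓕 (auxComp v j) ξ‖ₑ ^ 2 ≤
    ‖𝓕 (fun x => ((pd 2 0 (fun y => v y 1) x - pd 2 1 (fun y => v y 0) x : ℝ) : ℂ)) ξ‖ₑ ^ 2 := by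
  set e : Fin 2 → Ed 2 := fun i => EuclideanSpace.single i (1:ℝ) with he
  have hD : ∂_{e 0} (auxComp v 0) + ∂_{e 1} (auxComp v 1) = 0 := by
    ext x
    rw [_root_.add_apply, auxComp_deriv, auxComp_deriv, ← Complex.ofReal_add, hv]
    simp
  have hW : (fun x => ((pd 2 0 (fun y => v y 1) x - pd 2 1 (fun y => v y 0) x : ℝ) : ℂ)) =
      ⇑(∂_{e 0} (auxComp v 1) - ∂_{e 1} (auxComp v 0)) := by
    ext x
    rw [_root_.sub_apply, auxComp_deriv, auxComp_deriv, ← Complex.ofReal_sub]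
  rw [hW, ← SchwartzMap.fourier_coe]
  have hD' : 𝓕 (∂_{e 0} (auxComp v 0)) ξ + 𝓕 (∂_{e 1} (auxComp v 1)) ξ = 0 := by
    rw [← _root_.add_apply, ← FourierTransform.fourier_add, hD]
    rw [FourierTransform.fourier_zero]; rfl
  have hsub : 𝓕 (∂_{e 0} (auxComp v 1) - ∂_{e 1} (auxComp v 0)) ξ =
      𝓕 (∂_{e 0} (auxComp v 1)) ξ - 𝓕 (∂_{e 1} (auxComp v 0)) ξ := by
    rw [← SchwartzMap.fourierTransformCLM_apply ℂ, map_sub]; rfl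
  rw [hsub]
  simp only [he, aux_ft_deriv] at hD' ⊢
  have hc : (2 * Real.pi * Complex.I) ≠ 0 := by simp [Real.pi_ne_zero]
  have hD2 : (ξ 0 : ℂ) * 𝓕 (auxComp v 0) ξ + ξ 1 * 𝓕 (auxComp v 1) ξ = 0 := by
    apply mul_left_cancel₀ hc
    rw [mul_add, hD', mul_zero]
  have hL := aux_lagrange _ _ _ _ hD2
  rw [← mul_sub, enorm_mul, mul_pow]
  have hn : ‖ξ‖ ^ 2 = ξ 0 ^ 2 + ξ 1 ^ 2 := by
    rw [EuclideanSpace.norm_sq_eq]; simp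
  have h1 : ‖ξ‖ₑ ^ 2 * ‖𝓕 (auxComp v j) ξ‖ₑ ^ 2 ≤
      ‖(ξ 0 : ℂ) * 𝓕 (auxComp v 1) ξ - ξ 1 * 𝓕 (auxComp v 0) ξ‖ₑ ^ 2 := by
    simp only [← ofReal_norm]
    rw [← ENNReal.ofReal_pow (norm_nonneg _), ← ENNReal.ofReal_pow (norm_nonneg _),
      ← ENNReal.ofReal_pow (norm_nonneg _), ← ENNReal.ofReal_mul (by positivity), hL, hn]
    gcongr
    fin_cases j <;> simp
  refine h1.trans (le_mul_of_one_le_left' (one_le_pow₀ ?_))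
  rw [← ofReal_norm, ENNReal.one_le_ofReal]
  simp [abs_of_pos Real.pi_pos]
  linarith [Real.pi_gt_three]

lemma aux_sob (v : 𝓢(Ed 2, Ed 2)) (θ : ℝ) (hθ : 0 < θ)
    (hv : ∀ x, pd 2 0 (fun y => v y 0) x + pd 2 1 (fun y => v y 1) x = 0) (j : Fin 2) :
    ∫⁻ ξ, ‖ξ‖ₑ ^ (2 + 2 * θ) * ‖𝓕 (auxComp v j) ξ‖ₑ ^ 2 ≤
    (sobolevSemi 2 θ
      (fun x => ((pd 2 0 (fun y => v y 1) x - pd 2 1 (fun y => v y 0) x : ℝ) : ℂ))) ^ (2 : ℝ) := by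
  have hpi : 1 ≤ 2 * Real.pi := by linarith [Real.pi_gt_three]
  rw [sobolevSemi, ← ENNReal.rpow_mul, one_div_mul_cancel two_ne_zero, ENNReal.rpow_one]
  have h1 : ∫⁻ ξ, ‖ξ‖ₑ ^ (2 + 2 * θ) * ‖𝓕 (auxComp v j) ξ‖ₑ ^ 2 =
      ENNReal.ofReal ((2 * Real.pi) ^ (-((2:ℕ) : ℝ))) * 
      ∫⁻ κ : Ed 2, ‖(2 * Real.pi)⁻¹ • κ‖ₑ ^ (2 + 2 * θ)
        * ‖𝓕 (auxComp v j) ((2 * Real.pi)⁻¹ • κ)‖ₑ ^ 2 := by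
    have hm : Measurable fun ξ => ‖𝓕 (auxComp v j) ξ‖ₑ := (𝓕 (auxComp v j)).continuous.measurable.enorm
    rw [aux_scale (2 * Real.pi)⁻¹ (by positivity) (fun ξ => ‖ξ‖ₑ ^ (2 + 2 * θ) * ‖𝓕 (auxComp v j) ξ‖ₑ ^ 2)
      (by fun_prop), ← mul_assoc, ← ENNReal.ofReal_mul (by positivity), Real.rpow_neg (by positivity),
      Real.rpow_natCast]
    have : ((2 * Real.pi) ^ 2)⁻¹ * (((2 * Real.pi)⁻¹) ^ 2)⁻¹ = 1 := by
      have := Real.pi_pos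
      field_simp
    rw [this]; simp
  rw [h1]
  refine mul_le_mul_right (lintegral_mono fun κ => ?_) _
  rw [aux_ft]
  set ξ := (2 * Real.pi)⁻¹ • κ with hξ
  have h2 : ‖ξ‖ₑ ≤ ‖κ‖ₑ := by
    rw [hξ, enorm_smul]
    refine mul_le_of_le_one_left' ?_
    rw [← ofReal_norm, ENNReal.ofReal_le_one, norm_inv]
    refine inv_le_one_of_one_le₀ (hpi.trans (le_abs_self _))
  have h3 := aux_vort v hv j ξ
  calc _ = ‖ξ‖ₑ ^ (2 * θ) * (‖ξ‖ₑ ^ 2 * ‖𝓕 (auxComp v j) ξ‖ₑ ^ 2) := by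
        rw [ENNReal.rpow_add_of_nonneg _ _ (by norm_num) (by positivity), ENNReal.rpow_two]; ring
    _ ≤ ‖κ‖ₑ ^ (2 * θ) * _ := by gcongr; exact h3
    _ = _ := rfl

lemma aux_L2 (v : 𝓢(Ed 2, Ed 2)) (j : Fin 2) :
    ∫⁻ ξ, ‖𝓕 (auxComp v j) ξ‖ₑ ^ 2 ≤ eLpNorm (⇑v) 2 volume ^ (2 : ℝ) := by
  have hint : ∀ f : 𝓢(Ed 2, ℂ), ∫⁻ ξ, ‖f ξ‖ₑ ^ 2 = ENNReal.ofReal (∫ ξ, ‖f ξ‖ ^ 2) := by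
    intro f
    rw [ofReal_integral_eq_lintegral_ofReal]
    · simp [ENNReal.ofReal_pow]
    · exact (f.memLp 2).integrable_norm_pow two_ne_zero
    · exact Filter.Eventually.of_forall fun x => by positivity
  rw [hint, SchwartzMap.integral_norm_sq_fourier, ← hint,
    eLpNorm_eq_lintegral_rpow_enorm_toReal (by simp) (by simp), ← ENNReal.rpow_mul]
  simp only [ENNReal.toReal_ofNat, ENNReal.rpow_two]
  rw [one_div_mul_cancel two_ne_zero, ENNReal.rpow_one]
  gcongr with x
  rw [auxComp_apply, enorm_le_iff_norm_le, Complex.norm_real]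
  exact PiLp.norm_apply_le (v x) j

lemma aux_inv (f : 𝓢(Ed 2, ℂ)) (x : Ed 2) : ‖f x‖ₑ ≤ ∫⁻ ξ, ‖𝓕 f ξ‖ₑ := by
  have h : 𝓕⁻ (𝓕 f) = f := FourierTransform.fourierInv_fourier_eq f
  conv_lhs => rw [← h, SchwartzMap.fourierInv_coe, Real.fourierInv_eq']
  refine (enorm_integral_le_lintegral_enorm _).trans_eq (lintegral_congr fun ξ => ?_)
  rw [enorm_smul]
  have : ‖Complex.exp (↑(2 * Real.pi * ⟪ξ, x⟫) * Complex.I)‖ₑ = 1 := by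
    rw [← ofReal_norm, Complex.norm_exp_ofReal_mul_I]; simp
  rw [this, one_mul]


/-- For a divergence-free Schwartz vector field `v` on `ℝ²` with vorticity
`ω` and `0 < θ ≤ 1`: `‖v‖_∞ ≤ C ‖v‖₂^{θ/(θ+1)} [ω]_θ^{1/(θ+1)}`. -/
theorem stmt10 (θ : ℝ) (hθ0 : 0 < θ) (hθ1 : θ ≤ 1) :
    ∃ C : ℝ, 0 < C ∧ ∀ v : SchwartzMap (Ed 2) (Ed 2),
      (∀ x, pd 2 0 (fun y => v y 0) x + pd 2 1 (fun y => v y 1) x = 0) →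
      (⨆ x, (‖v x‖₊ : ℝ≥0∞))
        ≤ ENNReal.ofReal C * eLpNorm (⇑v) 2 volume ^ (θ / (θ + 1)) *
          sobolevSemi 2 θ
            (fun x => ((pd 2 0 (fun y => v y 1) x - pd 2 1 (fun y => v y 0) x : ℝ) : ℂ))
              ^ (1 / (θ + 1)) := by
  obtain ⟨K, hK, hI⟩ := aux_interp θ hθ0
  refine ⟨2 * (K ^ (1 / 2 : ℝ)).toReal + 1, by positivity, fun v hv => iSup_le fun x => ?_⟩
  set N := eLpNorm (⇑v) 2 volume
  set S := sobolevSemi 2 θ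
    (fun x => ((pd 2 0 (fun y => v y 1) x - pd 2 1 (fun y => v y 0) x : ℝ) : ℂ)) with hS
  have hθ' : 0 < θ + 1 := by linarith
  have key : ∀ j, ‖v x j‖ₑ ≤ K ^ (1 / 2 : ℝ) * (N ^ (θ / (θ + 1)) * S ^ (1 / (θ + 1))) := by
    intro j
    have h1 := aux_inv (auxComp v j) x
    have h2 := hI (fun ξ => ‖𝓕 (auxComp v j) ξ‖ₑ) (𝓕 (auxComp v j)).continuous.measurable.enorm
    have h3 := aux_L2 v j
    have h4 := aux_sob v θ hθ0 hv j
    have h0 : ‖auxComp v j x‖ₑ = ‖v x j‖ₑ := by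
      rw [auxComp_apply, ← ofReal_norm, ← ofReal_norm, Complex.norm_real]
    rw [← h0]
    refine h1.trans (h2.trans ?_)
    calc _ ≤ (K * ((N ^ (2:ℝ)) ^ (θ / (θ + 1)) * (S ^ (2:ℝ)) ^ (1 / (θ + 1)))) ^ (1 / 2 : ℝ) := by
          gcongr
      _ = _ := by
          rw [ENNReal.mul_rpow_of_nonneg _ _ (by norm_num), ENNReal.mul_rpow_of_nonneg _ _ (by norm_num)]
          simp only [← ENNReal.rpow_mul]
          congr 3 <;> ring
  have hsum : (‖v x‖₊ : ℝ≥0∞) ≤ ‖v x 0‖ₑ + ‖v x 1‖ₑ := by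
    change ‖v x‖ₑ ≤ _
    simp only [← ofReal_norm]
    rw [← ENNReal.ofReal_add (norm_nonneg _) (norm_nonneg _)]
    apply ENNReal.ofReal_le_ofReal
    rw [EuclideanSpace.norm_eq, Real.sqrt_le_left (by positivity), Fin.sum_univ_two]
    nlinarith [norm_nonneg (v x 0), norm_nonneg (v x 1)]
  have hKf : K ^ (1 / 2 : ℝ) ≠ ⊤ := ENNReal.rpow_ne_top_of_nonneg (by norm_num) hK
  refine hsum.trans ((add_le_add (key 0) (key 1)).trans ?_)
  rw [← two_mul, ← mul_assoc, mul_assoc (ENNReal.ofReal _)]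
  gcongr
  rw [ENNReal.ofReal_add (by positivity) (by norm_num), ENNReal.ofReal_mul (by norm_num),
    ENNReal.ofReal_toReal hKf]
  simp
end
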